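/- Let K be a number field and S a finite set of places of K containing all the archimedean ones. Let φ be an endomorphism of ℙ¹ defined over K of degree d ≥ 2 with good reduction outside S, and let P ∈ ℙ¹(K) be a periodic point of φ of period 2. Then |Tail(φ,K,P)| ≤ max{ (2(C(3,|S|)+2)+1)d + 1, (d−1)(1 + B(|S|)(B(|S|) + C(3,|S|) + 3)) }, where B(s) = 2^{16s} and C(3,s) = e^{18^9(3s−2)}. -/

import Mathlib

open NumberField IsDedekindDomain MvPolynomial
open scoped Classical nonZeroDivisors

set_option synthInstance.maxHeartbeats 1000000
set_option maxHeartbeats 1000000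

noncomputable section

/-- The projective line over `K`. -/
abbrev P1 (K : Type*) [Field K] := Projectivization K (Fin 2 → K)

variable {K : Type*} [Field K] [NumberField K]

/-- The additive `v`-adic valuation (order) of `x ∈ K`, with junk value `0` at `x = 0`,
normalized so that it is surjective onto `ℤ`. -/
def ordAt (v : HeightOneSpectrum (𝓞 K)) (x : K) : ℤ :=
  if hx : x = 0 then 0
  else - Multiplicative.toAdd (WithZero.unzero ((v.valuation K).ne_zero_iff.mpr hx))

/-- `min (v(x), v(y))` for a pair of coordinates, not both zero. -/
def minOrd (v : HeightOneSpectrum (𝓞 K)) (x y : K) : ℤ :=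
  if x = 0 then ordAt v y else if y = 0 then ordAt v x else min (ordAt v x) (ordAt v y)

/-- The `v`-adic logarithmic distance between two points of `ℙ¹(K)`:
`δ_v(P,Q) = v(x₁y₂ - x₂y₁) - min(v x₁, v y₁) - min(v x₂, v y₂)`, with value `⊤` when `P = Q`
(it is independent of the choice of homogeneous coordinates, so we compute it on the chosen
representatives). -/
def logDist (v : HeightOneSpectrum (𝓞 K)) (P Q : P1 K) : WithTop ℤ :=
  if P = Q then ⊤
  else ((ordAt v (P.rep 0 * Q.rep 1 - P.rep 1 * Q.rep 0)
        - minOrd v (P.rep 0) (P.rep 1) - minOrd v (Q.rep 0) (Q.rep 1) : ℤ) : WithTop ℤ)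

/-- An endomorphism of `ℙ¹` of degree `d` defined over `K`, given by a pair of homogeneous
forms of degree `d` with no common zero over the algebraic closure, together with the induced
self-map of `ℙ¹(K)`. -/
structure P1Map (K : Type*) [Field K] (d : ℕ) where
  toFun : P1 K → P1 K
  F : MvPolynomial (Fin 2) K
  G : MvPolynomial (Fin 2) K
  homF : F.IsHomogeneous d
  homG : G.IsHomogeneous d
  coprime : ∀ x y : AlgebraicClosure K,
    aeval ![x, y] F = 0 → aeval ![x, y] G = 0 → x = 0 ∧ y = 0
  compat : ∀ (x y : K) (hxy : ![x, y] ≠ 0)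
    (h : ![eval ![x, y] F, eval ![x, y] G] ≠ 0),
    toFun (Projectivization.mk K ![x, y] hxy) =
      Projectivization.mk K ![eval ![x, y] F, eval ![x, y] G] h

variable {d : ℕ}

/-- `φ` has good reduction at the finite place `v`: some representing pair of forms has
coefficients in the valuation ring at `v`, not all in the maximal ideal, and the reductions
of the two forms modulo `v` have no common zero in `ℙ¹` of the algebraic closure of the
residue field. -/
def GoodReductionAt (φ : P1Map K d) (v : HeightOneSpectrum (𝓞 K)) : Prop :=
  ∃ c : K, c ≠ 0 ∧
    ∃ F₀ G₀ : MvPolynomial (Fin 2) (v.valuation (K := K)).valuationSubring,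
      MvPolynomial.map ((v.valuation (K := K)).valuationSubring.subtype) F₀ = C c * φ.F ∧
      MvPolynomial.map ((v.valuation (K := K)).valuationSubring.subtype) G₀ = C c * φ.G ∧
      ((∃ m, F₀.coeff m ∉ IsLocalRing.maximalIdeal (v.valuation (K := K)).valuationSubring) ∨
        (∃ m, G₀.coeff m ∉ IsLocalRing.maximalIdeal (v.valuation (K := K)).valuationSubring)) ∧
      ∀ x y : AlgebraicClosure
          (IsLocalRing.ResidueField (v.valuation (K := K)).valuationSubring),
        eval ![x, y] (MvPolynomial.map
          ((algebraMap (IsLocalRing.ResidueField (v.valuation (K := K)).valuationSubring)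
              (AlgebraicClosure _)).comp
            (IsLocalRing.residue _)) F₀) = 0 →
        eval ![x, y] (MvPolynomial.map
          ((algebraMap (IsLocalRing.ResidueField (v.valuation (K := K)).valuationSubring)
              (AlgebraicClosure _)).comp
            (IsLocalRing.residue _)) G₀) = 0 →
        x = 0 ∧ y = 0

/-- `φ` has good reduction outside `S`, where `S` consists of all archimedean places together
with the finite places in `T`. -/
def GoodReductionOutside (φ : P1Map K d) (T : Finset (HeightOneSpectrum (𝓞 K))) : Prop :=
  ∀ v ∉ T, GoodReductionAt φ v

/-- `P` is a periodic point of `φ`. -/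
def IsPeriodicPoint (φ : P1Map K d) (P : P1 K) : Prop :=
  ∃ n, 0 < n ∧ φ.toFun^[n] P = P

/-- `P` is a preperiodic point of `φ`. -/
def IsPreperiodicPoint (φ : P1Map K d) (P : P1 K) : Prop :=
  ∃ m, IsPeriodicPoint φ (φ.toFun^[m] P)

/-- `P` is a tail point of `φ`: preperiodic but not periodic. -/
def IsTailPoint (φ : P1Map K d) (P : P1 K) : Prop :=
  IsPreperiodicPoint φ P ∧ ¬ IsPeriodicPoint φ P

/-- The set `Tail(φ,K,P)` of `K`-rational tail points of `P`: non-periodic points having `P`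
in their forward orbit. -/
def TailOf (φ : P1Map K d) (P : P1 K) : Set (P1 K) :=
  {Q | ¬ IsPeriodicPoint φ Q ∧ ∃ n, φ.toFun^[n] Q = P}

/-- `P = [a:b]` is a critical point of `φ = [F:G]`: the algebraic condition
`φ([x:y]) = φ([a:b])`, i.e. the form `G(a,b)·F(X,Y) - F(a,b)·G(X,Y)`, vanishes to order
at least `2` at `[a:b]`. -/
def IsCriticalPt (φ : P1Map K d) (P : P1 K) : Prop :=
  ∃ (a b : K) (hab : ![a, b] ≠ 0), P = Projectivization.mk K ![a, b] hab ∧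
    (C b * X 0 - C a * X 1) ^ 2 ∣
      (C (eval ![a, b] φ.G) * φ.F - C (eval ![a, b] φ.F) * φ.G)

/-- `P` belongs to a critical cycle of `φ`: it lies in the orbit of a critical periodic
point. -/
def InCriticalCycle (φ : P1Map K d) (P : P1 K) : Prop :=
  ∃ Q, IsCriticalPt φ Q ∧ IsPeriodicPoint φ Q ∧ ∃ n, φ.toFun^[n] Q = P

/-- The cardinality `|S|` of the set of places `S` consisting of all archimedean places
together with the finite places in `T`. -/
def sCard (K : Type*) [Field K] [NumberField K] (T : Finset (HeightOneSpectrum (𝓞 K))) : ℕ :=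
  T.card + Fintype.card (InfinitePlace K)

/-- `B(s) = 2^{16 s}`. -/
def Bconst (s : ℕ) : ℕ := 2 ^ (16 * s)

/-- `C(n,s) = e^{(6n)^{3n} (n s + 1 - n)}`. -/
def Cconst (n s : ℕ) : ℝ := Real.exp ((6 * n : ℝ) ^ (3 * n) * (n * s + 1 - n))

/-- `CV(d,s) = (3B(s)+13)d + 27B(s) + C(5,s) + 6C(3,s) + 32`. -/
def CVconst (d s : ℕ) : ℝ :=
  (3 * (Bconst s : ℝ) + 13) * d + 27 * (Bconst s : ℝ) + Cconst 5 s + 6 * Cconst 3 s + 32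

/-- `L₁(d,s) = (d-1)(1 + d(1 + B(s)))`. -/
def L1const (d s : ℕ) : ℕ := (d - 1) * (1 + d * (1 + Bconst s))

/-- `L₂(d,s) = max{(2(C(3,s)+2)+1)d + 1, (d-1)(1 + B(s)(B(s) + C(3,s) + 3))}`. -/
def L2const (d s : ℕ) : ℝ :=
  max ((2 * (Cconst 3 s + 2) + 1) * d + 1)
    (((d : ℝ) - 1) * (1 + (Bconst s : ℝ) * ((Bconst s : ℝ) + Cconst 3 s + 3)))

/-- `L₃(d,s) = ((1 + 3B(s))B(s) + 1)(d-1)`. -/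
def L3const (d s : ℕ) : ℕ := ((1 + 3 * Bconst s) * Bconst s + 1) * (d - 1)

/-- `L₄(d,s) = (C(3,s) + 3)(d-1)`. -/
def L4const (d s : ℕ) : ℝ := (Cconst 3 s + 3) * ((d : ℝ) - 1)

end


/-- Separation for nonarchimedean absolute values. -/
theorem tp_sepNA {K : Type*} [Field K] (f : AbsoluteValue K ℝ) (hf : ∀ x y, f (x + y) ≤ max (f x) (f y))
    (A B : Finset K) (hAB : Disjoint A B) :
    ∃ A' ⊆ A, ∃ B' ⊆ B, A.card ≤ 3 * A'.card ∧ B.card ≤ 3 * B'.card ∧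
      ∀ a ∈ A', ∀ a' ∈ A', ∀ b ∈ B', ∀ b' ∈ B',
        f ((a - a') * (b - b')) ≤ f ((a - b') * (a' - b)) := by
  have hsub : ∀ x y : K, f (x - y) = f (y - x) := fun x y => f.map_sub x y
  have hult : ∀ x y z : K, f (x - z) ≤ max (f (x - y)) (f (y - z)) := fun x y z => by
    have := hf (x - y) (y - z); simpa using this
  -- if x,y are strictly closer than y,z then |x-z| = |y-z|
  have hiso : ∀ x y z : K, f (x - y) < f (y - z) → f (x - z) = f (y - z) := fun x y z h => by
    apply le_antisymm
    · exact (hult x y z).trans (max_le h.le le_rfl)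
    · have := hult y x z
      rw [hsub y x] at this
      rcases le_max_iff.1 this with h' | h'
      · exact absurd h (not_lt.2 h')
      · exact h'
  let X := A ∪ B
  let Mod : Finset K → Prop := fun G => ∀ x ∈ G, ∀ x' ∈ G, ∀ y ∈ X, y ∉ G → f (x - y) = f (x' - y)
  let Fam := X.powerset.filter (fun G => Mod G ∧
    (A.card ≤ 3 * (A ∩ G).card ∨ B.card ≤ 3 * (B ∩ G).card))
  have hFam : Fam.Nonempty := by
    refine ⟨X, ?_⟩
    simp only [Fam, Finset.mem_filter, Finset.mem_powerset, subset_refl, true_and]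
    refine ⟨fun x _ x' _ y hy hy' => absurd hy hy', Or.inl ?_⟩
    have : A ∩ X = A := Finset.inter_eq_left.2 Finset.subset_union_left
    rw [this]; omega
  obtain ⟨G, hG, hmin⟩ := Finset.exists_min_image Fam Finset.card hFam
  have key : ∀ U V : Finset K, (∀ u ∈ U, u ∈ X) → (∀ v ∈ V, v ∈ X) → ∀ G, Mod G → U ⊆ G → Disjoint V G →
      ∀ a ∈ U, ∀ a' ∈ U, ∀ b ∈ V, ∀ b' ∈ V, f ((a - a') * (b - b')) ≤ f ((a - b') * (a' - b)) ∧
        f ((b - b') * (a - a')) ≤ f ((b - a') * (b' - a)) := by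
    intro U V hU hV G hG hUG hVG a ha a' ha' b hb b' hb'
    have e1 := hG a (hUG ha) a' (hUG ha') b (hV b hb) (Finset.disjoint_left.1 hVG hb)
    have e2 := hG a (hUG ha) a' (hUG ha') b' (hV b' hb') (Finset.disjoint_left.1 hVG hb')
    have e3 : (a - a') * (b - b') = (a - b) * (a' - b') - (a - b') * (a' - b) := by ring
    have e4 : f ((a - b) * (a' - b')) = f ((a - b') * (a' - b)) := by
      rw [map_mul, map_mul, e1, e2, mul_comm]
    have h1 : f ((a - a') * (b - b')) ≤ f ((a - b') * (a' - b)) := by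
      rw [e3, sub_eq_add_neg]
      refine (hf _ _).trans ?_
      rw [f.map_neg, e4, max_self]
    refine ⟨h1, ?_⟩
    rw [mul_comm (b - b') (a - a'), show (b - a') * (b' - a) = (a - b') * (a' - b) by ring]
    exact h1
  simp only [Fam, Finset.mem_filter, Finset.mem_powerset] at hG hmin
  obtain ⟨hGX, hGM, hGbig⟩ := hG
  by_cases hsplit : ∃ p ∈ G, ∃ q ∈ G, p ≠ q
  · obtain ⟨p0, hp0, q0, hq0, hpq0⟩ := hsplit
    obtain ⟨⟨p, q⟩, hpqm, hmax⟩ := Finset.exists_max_image (G ×ˢ G) (fun z => f (z.1 - z.2))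
      ⟨(p0, q0), by simp [hp0, hq0]⟩
    simp only [Finset.mem_product, and_imp, Prod.forall] at hpqm hmax
    have hr : 0 < f (p - q) := lt_of_lt_of_le (f.pos (sub_ne_zero.2 hpq0)) (hmax _ _ hp0 hq0)
    let G1 := G.filter (fun x => f (x - p) < f (p - q))
    let G2 := G.filter (fun x => ¬ f (x - p) < f (p - q))
    have hG2r : ∀ x ∈ G1, ∀ y ∈ G2, f (x - y) = f (p - q) := by
      intro x hx y hy
      simp only [G1, G2, Finset.mem_filter, not_lt] at hx hy
      have h1 : f (p - y) = f (p - q) := le_antisymm (hmax _ _ hpqm.1 hy.1) (by rw [hsub p y]; exact hy.2)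
      rw [hiso x p y (by rw [h1]; exact hx.2), h1]
    have hM1 : Mod G1 := by
      intro x hx x' hx' y hy hyG
      by_cases hyg : y ∈ G
      · have hy2 : y ∈ G2 := by
          simp only [G1, G2, Finset.mem_filter, not_and] at hyG ⊢; exact ⟨hyg, hyG hyg⟩
        rw [hG2r x hx y hy2, hG2r x' hx' y hy2]
      · exact hGM x (Finset.filter_subset _ _ hx) x' (Finset.filter_subset _ _ hx') y hy hyg
    have hM2 : Mod G2 := by
      intro x hx x' hx' y hy hyG
      by_cases hyg : y ∈ G
      · have hy2 : y ∈ G1 := by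
          simp only [G1, G2, Finset.mem_filter, not_and, not_not] at hyG ⊢; exact ⟨hyg, hyG hyg⟩
        rw [hsub x y, hG2r y hy2 x hx, hsub x' y, hG2r y hy2 x' hx']
      · exact hGM x (Finset.filter_subset _ _ hx) x' (Finset.filter_subset _ _ hx') y hy hyg
    have hc : G1.card + G2.card = G.card := Finset.card_filter_add_card_filter_not _
    have hp1 : 0 < G1.card := Finset.card_pos.2 ⟨p, by simp [G1, hpqm.1, hr]⟩
    have hp2 : 0 < G2.card := Finset.card_pos.2 ⟨q, by simp [G2, hpqm.2, hsub q p]⟩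
    have hn1 : ¬ (A.card ≤ 3 * (A ∩ G1).card ∨ B.card ≤ 3 * (B ∩ G1).card) := fun h => by
      have := hmin G1 ⟨(Finset.filter_subset _ _).trans hGX, hM1, h⟩; omega
    have hn2 : ¬ (A.card ≤ 3 * (A ∩ G2).card ∨ B.card ≤ 3 * (B ∩ G2).card) := fun h => by
      have := hmin G2 ⟨(Finset.filter_subset _ _).trans hGX, hM2, h⟩; omega
    have hsum : ∀ U : Finset K, (U ∩ G).card ≤ (U ∩ G1).card + (U ∩ G2).card := fun U => by
      rw [← Finset.card_union_of_disjoint]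
      · apply Finset.card_le_card
        intro x hx
        simp only [G1, G2, Finset.mem_inter, Finset.mem_union, Finset.mem_filter] at hx ⊢
        tauto
      · rw [Finset.disjoint_left]; intro x hx hx'
        simp only [G1, G2, Finset.mem_inter, Finset.mem_filter] at hx hx'
        tauto
    have hdiff : ∀ U : Finset K, (U \ G).card + (U ∩ G).card = U.card := fun U =>
      Finset.card_sdiff_add_card_inter U G
    have hA := hsum A; have hB := hsum B; have hA' := hdiff A; have hB' := hdiff B
    push Not at hn1 hn2
    rcases hGbig with h | h
    · refine ⟨A ∩ G, Finset.inter_subset_left, B \ G, Finset.sdiff_subset, h, by omega, ?_⟩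
      intro a ha a' ha' b hb b' hb'
      exact (key (A ∩ G) (B \ G)
        (fun u hu => Finset.mem_union_left _ (Finset.inter_subset_left hu))
        (fun u hu => Finset.mem_union_right _ (Finset.sdiff_subset hu)) G hGM
        Finset.inter_subset_right Finset.sdiff_disjoint a ha a' ha' b hb b' hb').1
    · refine ⟨A \ G, Finset.sdiff_subset, B ∩ G, Finset.inter_subset_left, by omega, h, ?_⟩
      intro a ha a' ha' b hb b' hb'
      have := (key (B ∩ G) (A \ G)
        (fun u hu => Finset.mem_union_right _ (Finset.inter_subset_left hu))
        (fun u hu => Finset.mem_union_left _ (Finset.sdiff_subset hu)) G hGM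
        Finset.inter_subset_right Finset.sdiff_disjoint b hb b' hb' a ha a' ha').2
      exact this
  · push Not at hsplit
    rcases A.eq_empty_or_nonempty with hA | hA
    · exact ⟨A, subset_rfl, B, subset_rfl, by omega, by omega, by simp [hA]⟩
    rcases B.eq_empty_or_nonempty with hB | hB
    · exact ⟨A, subset_rfl, B, subset_rfl, by omega, by omega, by simp [hB]⟩
    have hA0 := hA.card_pos
    have hB0 := hB.card_pos
    rcases hGbig with h | h
    · refine ⟨A ∩ G, Finset.inter_subset_left, B, subset_rfl, h, by omega, ?_⟩
      intro a ha a' ha' b hb b' hb'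
      rw [hsplit a (Finset.inter_subset_right ha) a' (Finset.inter_subset_right ha')]
      simp only [sub_self, zero_mul, mul_zero, map_zero]; exact f.nonneg _
    · refine ⟨A, subset_rfl, B ∩ G, Finset.inter_subset_left, by omega, h, ?_⟩
      intro a ha a' ha' b hb b' hb'
      rw [hsplit b (Finset.inter_subset_right hb) b' (Finset.inter_subset_right hb')]
      simp only [sub_self, zero_mul, mul_zero, map_zero]; exact f.nonneg _

/-- One half of the archimedean separation. -/
theorem tp_sepArch_aux {K : Type*} (g : K → ℂ) (hg : Function.Injective g)
    (A B : Finset K) (hAB : Disjoint A B) (hA : 0 < A.card) (x : K) (r : ℝ) (hr : 0 ≤ r)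
    (hbig : A.card ≤ 4000 * (A.filter (fun a => ‖g a - g x‖ ≤ r)).card)
    (hsmall : ∀ V ⊆ B, (∀ p ∈ V, ∀ q ∈ V, ‖g p - g q‖ < r) → 4000 * V.card ≤ B.card) :
    ∃ A' ⊆ A, ∃ B' ⊆ B, A.card ≤ 4000 * A'.card ∧ B.card ≤ 4000 * B'.card ∧
      ∀ a ∈ A', ∀ a' ∈ A', ∀ b ∈ B', ∀ b' ∈ B',
        ‖(g a - g a') * (g b - g b')‖ ≤ 1 / 2 * ‖(g a - g b') * (g a' - g b)‖ := by
  refine ⟨A.filter (fun a => ‖g a - g x‖ ≤ r), Finset.filter_subset _ _,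
    B.filter (fun b => ¬ ‖g b - g x‖ ≤ 10 * r), Finset.filter_subset _ _, hbig, ?_, ?_⟩
  · rcases hr.eq_or_lt with h0 | hpos
    · subst h0
      have hne : (A.filter (fun a => ‖g a - g x‖ ≤ 0)).Nonempty := by
        rw [← Finset.card_pos]; omega
      obtain ⟨a, ha⟩ := hne
      simp only [Finset.mem_filter, norm_le_zero_iff, sub_eq_zero] at ha
      have : B.filter (fun b => ¬ ‖g b - g x‖ ≤ 10 * 0) = B := by
        apply Finset.filter_true_of_mem
        intro b hb hle
        simp only [mul_zero, norm_le_zero_iff, sub_eq_zero] at hle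
        have : a = b := hg (ha.2.trans hle.symm)
        exact Finset.disjoint_left.1 hAB ha.1 (this ▸ hb)
      rw [this]; omega
    · let D := B.filter (fun b => ‖g b - g x‖ ≤ 10 * r)
      have hD : D.card + (B.filter (fun b => ¬ ‖g b - g x‖ ≤ 10 * r)).card = B.card :=
        Finset.card_filter_add_card_filter_not _
      let cell : K → ℤ × ℤ := fun b => (⌊2 * (g b - g x).re / r⌋, ⌊2 * (g b - g x).im / r⌋)
      let I : Finset (ℤ × ℤ) := Finset.Icc (-20) 20 ×ˢ Finset.Icc (-20) 20
      have habs : ∀ t : ℝ, |t| ≤ 10 * r → ⌊2 * t / r⌋ ∈ Finset.Icc (-20 : ℤ) 20 := by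
        intro t ht
        rw [abs_le] at ht
        have h1 : -20 ≤ 2 * t / r := by rw [le_div_iff₀ hpos]; linarith
        have h2 : 2 * t / r ≤ 20 := by rw [div_le_iff₀ hpos]; linarith
        rw [Finset.mem_Icc]
        constructor
        · rw [Int.le_floor]; push_cast; exact h1
        · have := (Int.floor_le (2 * t / r)).trans h2
          exact_mod_cast this
      have hmaps : ∀ b ∈ D, cell b ∈ I := by
        intro b hb
        simp only [D, Finset.mem_filter] at hb
        simp only [cell, I, Finset.mem_product]
        exact ⟨habs _ ((Complex.abs_re_le_norm _).trans hb.2),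
          habs _ ((Complex.abs_im_le_norm _).trans hb.2)⟩
      have hfl : ∀ s t : ℝ, ⌊2 * s / r⌋ = ⌊2 * t / r⌋ → |s - t| < r / 2 := by
        intro s t h
        have := Int.abs_sub_lt_one_of_floor_eq_floor h
        rw [← sub_div, ← mul_sub, abs_div, abs_of_pos hpos, div_lt_one hpos, abs_mul, abs_two] at this
        linarith
      have hfib : ∀ i ∈ I, 4000 * (D.filter (fun b => cell b = i)).card ≤ B.card := by
        intro i _
        apply hsmall _ ((Finset.filter_subset _ _).trans (Finset.filter_subset _ _))
        intro p hp q hq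
        have hpc := (Finset.mem_filter.1 hp).2
        have hqc := (Finset.mem_filter.1 hq).2
        have hpq : cell p = cell q := hpc.trans hqc.symm
        simp only [cell, Prod.mk.injEq] at hpq
        have h1 := hfl _ _ hpq.1
        have h2 := hfl _ _ hpq.2
        have h3 := Complex.norm_le_abs_re_add_abs_im (g p - g q)
        have e1 : (g p - g x).re - (g q - g x).re = (g p - g q).re := by simp
        have e2 : (g p - g x).im - (g q - g x).im = (g p - g q).im := by simp
        rw [e1] at h1; rw [e2] at h2
        linarith
      have hcard : D.card = ∑ i ∈ I, (D.filter (fun b => cell b = i)).card :=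
        Finset.card_eq_sum_card_fiberwise hmaps
      have hI : I.card = 1681 := by
        simp only [I, Finset.card_product, Int.card_Icc]; rfl
      have : 4000 * D.card ≤ 1681 * B.card := by
        rw [hcard, Finset.mul_sum]
        refine (Finset.sum_le_card_nsmul _ _ _ hfib).trans ?_
        rw [hI]; simp
      omega
  · intro a ha a' ha' b hb b' hb'
    simp only [Finset.mem_filter, not_le] at ha ha' hb hb'
    set α := g a - g x with hα
    set α' := g a' - g x with hα'
    set β := g b - g x with hβ
    set β' := g b' - g x with hβ'
    have e1 : g a - g a' = α - α' := by rw [hα, hα']; ring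
    have e2 : g b - g b' = β - β' := by rw [hβ, hβ']; ring
    have e3 : g a - g b' = α - β' := by rw [hα, hβ']; ring
    have e4 : g a' - g b = α' - β := by rw [hα', hβ]; ring
    rw [e1, e2, e3, e4, norm_mul, norm_mul]
    have h1 : ‖α - α'‖ ≤ 2 * r := (norm_sub_le _ _).trans (by linarith [ha.2, ha'.2])
    have h2 : ‖β - β'‖ ≤ ‖β‖ + ‖β'‖ := norm_sub_le _ _
    have h3 : ‖β'‖ - r ≤ ‖α - β'‖ := by
      have := norm_sub_norm_le β' α
      rw [norm_sub_rev β' α] at this; linarith [ha.2]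
    have h4 : ‖β‖ - r ≤ ‖α' - β‖ := by
      have := norm_sub_norm_le β α'
      rw [norm_sub_rev β α'] at this; linarith [ha'.2]
    have hb1 := hb.2
    have hb2 := hb'.2
    have h5 : ‖α - α'‖ * ‖β - β'‖ ≤ 2 * r * (‖β‖ + ‖β'‖) := by gcongr
    have h6 : (‖β'‖ - r) * (‖β‖ - r) ≤ ‖α - β'‖ * ‖α' - β‖ := by
      apply mul_le_mul h3 h4 (by linarith) (by positivity)
    nlinarith [mul_nonneg hr hr, mul_nonneg (sub_nonneg.2 hb1.le) (sub_nonneg.2 hb2.le),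
      mul_nonneg hr (sub_nonneg.2 hb1.le), mul_nonneg hr (sub_nonneg.2 hb2.le)]

theorem tp_sepArch {K : Type*} (g : K → ℂ) (hg : Function.Injective g)
    (A B : Finset K) (hAB : Disjoint A B) :
    ∃ A' ⊆ A, ∃ B' ⊆ B, A.card ≤ 4000 * A'.card ∧ B.card ≤ 4000 * B'.card ∧
      ∀ a ∈ A', ∀ a' ∈ A', ∀ b ∈ B', ∀ b' ∈ B',
        ‖(g a - g a') * (g b - g b')‖ ≤ 1 / 2 * ‖(g a - g b') * (g a' - g b)‖ := by
  rcases A.eq_empty_or_nonempty with hA | hA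
  · exact ⟨A, subset_rfl, B, subset_rfl, by omega, by omega, by simp [hA]⟩
  rcases B.eq_empty_or_nonempty with hB | hB
  · exact ⟨A, subset_rfl, B, subset_rfl, by omega, by omega, by simp [hB]⟩
  let X := A ∪ B
  let Big : K × K → Prop := fun z =>
    A.card ≤ 4000 * (A.filter (fun a => ‖g a - g z.1‖ ≤ ‖g z.2 - g z.1‖)).card ∨
    B.card ≤ 4000 * (B.filter (fun a => ‖g a - g z.1‖ ≤ ‖g z.2 - g z.1‖)).card
  let Fam := (X ×ˢ X).filter Big
  have hFam : Fam.Nonempty := by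
    obtain ⟨a, ha⟩ := hA
    obtain ⟨y, hy, hmax⟩ := Finset.exists_max_image A (fun y => ‖g y - g a‖) ⟨a, ha⟩
    refine ⟨(a, y), ?_⟩
    simp only [Fam, Finset.mem_filter, Finset.mem_product]
    refine ⟨⟨Finset.mem_union_left _ ha, Finset.mem_union_left _ hy⟩, Or.inl ?_⟩
    rw [Finset.filter_true_of_mem hmax]; omega
  obtain ⟨⟨x, y⟩, hxy, hmin⟩ := Finset.exists_min_image Fam (fun z => ‖g z.2 - g z.1‖) hFam
  have hsm : ∀ V ⊆ X, V.Nonempty → (∀ p ∈ V, ∀ q ∈ V, ‖g p - g q‖ < ‖g y - g x‖) →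
      ∃ z, ¬ Big z ∧ ∀ p ∈ V, ‖g p - g z.1‖ ≤ ‖g z.2 - g z.1‖ := by
    intro V hV hne hd
    obtain ⟨p, hp⟩ := hne
    obtain ⟨q, hq, hmax⟩ := Finset.exists_max_image V (fun y => ‖g y - g p‖) ⟨p, hp⟩
    refine ⟨(p, q), fun hb => ?_, hmax⟩
    have := hmin (p, q) (by simp only [Fam, Finset.mem_filter, Finset.mem_product]; exact ⟨⟨hV hp, hV hq⟩, hb⟩)
    exact absurd (hd q hq p hp) (not_lt.2 this)
  have hsA : ∀ V ⊆ A, (∀ p ∈ V, ∀ q ∈ V, ‖g p - g q‖ < ‖g y - g x‖) → 4000 * V.card ≤ A.card := by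
    intro V hV hd
    rcases V.eq_empty_or_nonempty with h | h
    · simp [h]
    obtain ⟨z, hz, hz'⟩ := hsm V (hV.trans Finset.subset_union_left) h hd
    have : V.card ≤ (A.filter (fun a => ‖g a - g z.1‖ ≤ ‖g z.2 - g z.1‖)).card :=
      Finset.card_le_card (fun p hp => Finset.mem_filter.2 ⟨hV hp, hz' p hp⟩)
    simp only [Big, not_or, not_le] at hz
    omega
  have hsB : ∀ V ⊆ B, (∀ p ∈ V, ∀ q ∈ V, ‖g p - g q‖ < ‖g y - g x‖) → 4000 * V.card ≤ B.card := by
    intro V hV hd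
    rcases V.eq_empty_or_nonempty with h | h
    · simp [h]
    obtain ⟨z, hz, hz'⟩ := hsm V (hV.trans Finset.subset_union_right) h hd
    have : V.card ≤ (B.filter (fun a => ‖g a - g z.1‖ ≤ ‖g z.2 - g z.1‖)).card :=
      Finset.card_le_card (fun p hp => Finset.mem_filter.2 ⟨hV hp, hz' p hp⟩)
    simp only [Big, not_or, not_le] at hz
    omega
  rcases (Finset.mem_filter.1 hxy).2 with h | h
  · exact tp_sepArch_aux g hg A B hAB hA.card_pos x _ (norm_nonneg _) h hsB
  · obtain ⟨B', hB', A', hA', h1, h2, h3⟩ :=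
      tp_sepArch_aux g hg B A hAB.symm hB.card_pos x _ (norm_nonneg _) h hsA
    refine ⟨A', hA', B', hB', h2, h1, ?_⟩
    intro a ha a' ha' b hb b' hb'
    have := h3 b hb b' hb' a ha a' ha'
    rw [show (g a - g a') * (g b - g b') = (g b - g b') * (g a - g a') by ring,
      show (g a - g b') * (g a' - g b) = (g b - g a') * (g b' - g a) by ring]
    exact this

/-- Iterating a separation statement over a finite index set. -/
theorem tp_iter {K ι : Type*} (c : ℕ) (R : ι → K → K → K → K → Prop) (I : Finset ι)
    (h : ∀ i ∈ I, ∀ A B : Finset K, Disjoint A B → ∃ A' ⊆ A, ∃ B' ⊆ B, A.card ≤ c * A'.card ∧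
      B.card ≤ c * B'.card ∧ ∀ a ∈ A', ∀ a' ∈ A', ∀ b ∈ B', ∀ b' ∈ B', R i a a' b b')
    (A B : Finset K) (hAB : Disjoint A B) :
    ∃ A' ⊆ A, ∃ B' ⊆ B, A.card ≤ c ^ I.card * A'.card ∧ B.card ≤ c ^ I.card * B'.card ∧
      ∀ i ∈ I, ∀ a ∈ A', ∀ a' ∈ A', ∀ b ∈ B', ∀ b' ∈ B', R i a a' b b' := by
  induction I using Finset.induction_on with
  | empty => exact ⟨A, subset_rfl, B, subset_rfl, by simp, by simp, by simp⟩
  | insert i I hi ih =>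
    obtain ⟨A1, hA1, B1, hB1, h1, h2, h3⟩ := ih (fun j hj => h j (Finset.mem_insert_of_mem hj))
    obtain ⟨A2, hA2, B2, hB2, k1, k2, k3⟩ := h i (Finset.mem_insert_self _ _) A1 B1
      (Finset.disjoint_of_subset_left hA1 (Finset.disjoint_of_subset_right hB1 hAB))
    refine ⟨A2, hA2.trans hA1, B2, hB2.trans hB1, ?_, ?_, ?_⟩
    · rw [Finset.card_insert_of_notMem hi, pow_succ, mul_assoc]
      exact h1.trans (Nat.mul_le_mul_left _ k1)
    · rw [Finset.card_insert_of_notMem hi, pow_succ, mul_assoc]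
      exact h2.trans (Nat.mul_le_mul_left _ k2)
    · intro j hj a ha a' ha' b hb b' hb'
      rcases Finset.mem_insert.1 hj with rfl | hj
      · exact k3 a ha a' ha' b hb b' hb'
      · exact h3 j hj a (hA2 ha) a' (hA2 ha') b (hB2 hb) b' (hB2 hb')

/-- The core combinatorial statement. -/
theorem tp_core {K : Type*} [Field K] [NumberField K] (T : Finset (HeightOneSpectrum (𝓞 K)))
    (A B : Finset K) (hAB : Disjoint A B)
    (hunit : ∀ v ∉ T, ∀ a ∈ A, ∀ a' ∈ A, ∀ b ∈ B, ∀ b' ∈ B,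
      FinitePlace.mk v ((a - b) * (a' - b')) = FinitePlace.mk v ((a - b') * (a' - b))) :
    A.card < 2 * 4000 ^ (T.card + Fintype.card (InfinitePlace K)) ∨
      B.card < 2 * 4000 ^ (T.card + Fintype.card (InfinitePlace K)) := by
  by_contra hcon
  push Not at hcon
  obtain ⟨A1, hA1, B1, hB1, h1, h2, h3⟩ := tp_iter 3
    (fun (v : HeightOneSpectrum (𝓞 K)) (a a' b b' : K) =>
      FinitePlace.mk v ((a - a') * (b - b')) ≤ FinitePlace.mk v ((a - b') * (a' - b))) T
    (fun v _ A B hAB => tp_sepNA (FinitePlace.mk v).1 (fun x y => FinitePlace.add_le _ x y) A B hAB)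
    A B hAB
  obtain ⟨A2, hA2, B2, hB2, k1, k2, k3⟩ := tp_iter 4000
    (fun (w : InfinitePlace K) (a a' b b' : K) =>
      w ((a - a') * (b - b')) ≤ 1 / 2 * w ((a - b') * (a' - b))) Finset.univ
    (fun w _ A B hAB => by
      have := tp_sepArch (fun x => w.embedding x) w.embedding.injective A B hAB
      simpa only [← map_sub, ← map_mul, InfinitePlace.norm_embedding_eq] using this)
    A1 B1 (Finset.disjoint_of_subset_left hA1 (Finset.disjoint_of_subset_right hB1 hAB))
  have hcnt : ∀ n n1 n2 : ℕ, 2 * 4000 ^ (T.card + Fintype.card (InfinitePlace K)) ≤ n →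
      n ≤ 3 ^ T.card * n1 → n1 ≤ 4000 ^ (Finset.univ : Finset (InfinitePlace K)).card * n2 →
      1 < n2 := by
    intro n n1 n2 e1 e2 e3
    rw [Finset.card_univ] at e3
    by_contra hlt
    have hlt : n2 ≤ 1 := by omega
    have : n ≤ 4000 ^ T.card * (4000 ^ Fintype.card (InfinitePlace K) * 1) := by
      refine e2.trans (Nat.mul_le_mul (Nat.pow_le_pow_left (by norm_num) _) (e3.trans ?_))
      exact Nat.mul_le_mul_left _ hlt
    rw [mul_one, ← pow_add] at this
    have hp : 0 < 4000 ^ (T.card + Fintype.card (InfinitePlace K)) := by positivity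
    omega
  obtain ⟨a, ha, a', ha', haa⟩ := Finset.one_lt_card.1 (hcnt _ _ _ hcon.1 h1 k1)
  obtain ⟨b, hb, b', hb', hbb⟩ := Finset.one_lt_card.1 (hcnt _ _ _ hcon.2 h2 k2)
  have hne : ∀ x ∈ A2, ∀ y ∈ B2, x - y ≠ 0 := fun x hx y hy h => by
    rw [sub_eq_zero] at h
    exact Finset.disjoint_left.1 hAB (hA1 (hA2 hx)) (h ▸ hB1 (hB2 hy))
  set n := (a - a') * (b - b') with hn
  set e := (a - b') * (a' - b) with he
  have hn0 : n ≠ 0 := mul_ne_zero (sub_ne_zero.2 haa) (sub_ne_zero.2 hbb)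
  have he0 : e ≠ 0 := mul_ne_zero (hne a ha b' hb') (hne a' ha' b hb)
  have hfin : ∀ w : FinitePlace K, w (n / e) ≤ 1 := by
    intro w
    rw [map_div₀, div_le_one (FinitePlace.pos_iff.2 he0)]
    rw [← FinitePlace.mk_maximalIdeal w]
    by_cases hv : w.maximalIdeal ∈ T
    · exact h3 _ hv a (hA2 ha) a' (hA2 ha') b (hB2 hb) b' (hB2 hb')
    · have := hunit _ hv a (hA1 (hA2 ha)) a' (hA1 (hA2 ha')) b (hB1 (hB2 hb)) b' (hB1 (hB2 hb'))
      have e3 : n = (a - b) * (a' - b') + -((a - b') * (a' - b)) := by rw [hn]; ring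
      rw [e3]
      refine (FinitePlace.add_le _ _ _).trans ?_
      rw [map_neg_eq_map, this, max_self]
  have hinf : ∀ w : InfinitePlace K, w (n / e) ≤ 1 / 2 := by
    intro w
    rw [map_div₀, div_le_iff₀ (InfinitePlace.pos_iff.2 he0)]
    exact k3 w (Finset.mem_univ _) a ha a' ha' b hb b' hb'
  have hpf := prod_abs_eq_one (K := K) (div_ne_zero hn0 he0)
  have hP1 : 0 ≤ ∏ᶠ w : FinitePlace K, w (n / e) ∧ ∏ᶠ w : FinitePlace K, w (n / e) ≤ 1 := by
    apply finprod_induction (p := fun x : ℝ => 0 ≤ x ∧ x ≤ 1) ⟨zero_le_one, le_rfl⟩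
    · intro x y hx hy
      exact ⟨mul_nonneg hx.1 hy.1, mul_le_one₀ hx.2 hy.1 hy.2⟩
    · exact fun w => ⟨apply_nonneg w _, hfin w⟩
  have hP0 : 0 ≤ ∏ w : InfinitePlace K, w (n / e) ^ w.mult :=
    Finset.prod_nonneg (fun w _ => pow_nonneg (apply_nonneg w _) _)
  have hP2 : (∏ w : InfinitePlace K, w (n / e) ^ w.mult) < 1 := by
    obtain ⟨w0⟩ : Nonempty (InfinitePlace K) := inferInstance
    rw [← Finset.mul_prod_erase _ _ (Finset.mem_univ w0)]
    have h01 : ∏ w ∈ Finset.univ.erase w0, w (n / e) ^ w.mult ≤ 1 :=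
      Finset.prod_le_one (fun w _ => pow_nonneg (apply_nonneg w _) _)
        (fun w _ => pow_le_one₀ (apply_nonneg w _) ((hinf w).trans (by norm_num)))
    have h00 : 0 ≤ ∏ w ∈ Finset.univ.erase w0, w (n / e) ^ w.mult :=
      Finset.prod_nonneg (fun w _ => pow_nonneg (apply_nonneg w _) _)
    have h02 : w0 (n / e) ^ w0.mult < 1 :=
      pow_lt_one₀ (apply_nonneg w0 _) ((hinf w0).trans_lt (by norm_num)) InfinitePlace.mult_ne_zero
    exact mul_lt_one_of_nonneg_of_lt_one_left (pow_nonneg (apply_nonneg w0 _) _) h02 h01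
  have := mul_le_mul_of_nonneg_left hP1.2 hP0
  linarith

/-- Unimodular representative of a point over a valuation subring. -/
def tpRep {K : Type*} [Field K] (A : ValuationSubring K) (P : P1 K) (x : Fin 2 → A) : Prop :=
  (IsUnit (x 0) ∨ IsUnit (x 1)) ∧
    ∃ h : ![(x 0 : K), (x 1 : K)] ≠ 0, P = Projectivization.mk K ![(x 0 : K), (x 1 : K)] h

/-- Two points are congruent modulo the maximal ideal. -/
def tpCong {K : Type*} [Field K] (A : ValuationSubring K) (P Q : P1 K) : Prop :=
  ∃ x y, tpRep A P x ∧ tpRep A Q y ∧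
    ∀ i, IsLocalRing.residue A (x i) = IsLocalRing.residue A (y i)

/-- A self-map has an integral model with good reduction. -/
def tpModel {K : Type*} [Field K] (A : ValuationSubring K) (f : P1 K → P1 K) (d : ℕ) : Prop :=
  ∃ F₀ G₀ : MvPolynomial (Fin 2) A, F₀.IsHomogeneous d ∧ G₀.IsHomogeneous d ∧
    ∀ P x, tpRep A P x → tpRep A (f P) ![eval x F₀, eval x G₀]

theorem tp_uni_ne {K : Type*} [Field K] (A : ValuationSubring K) (x : Fin 2 → A)
    (h : IsUnit (x 0) ∨ IsUnit (x 1)) : ![(x 0 : K), (x 1 : K)] ≠ 0 := by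
  intro h0
  have e0 := congrFun h0 0
  have e1 := congrFun h0 1
  simp only [Matrix.cons_val_zero, Matrix.cons_val_one, Pi.zero_apply, ZeroMemClass.coe_eq_zero] at e0 e1
  rcases h with h | h
  · exact h.ne_zero e0
  · exact h.ne_zero e1

theorem tp_rep_exists {K : Type*} [Field K] (A : ValuationSubring K) (P : P1 K) :
    ∃ x, tpRep A P x := by
  have hr := P.rep_nonzero
  have hP := P.mk_rep
  have hcase : (P.rep 0 ≠ 0 ∧ P.rep 1 / P.rep 0 ∈ A) ∨ (P.rep 1 ≠ 0 ∧ P.rep 0 / P.rep 1 ∈ A) := by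
    by_cases h0 : P.rep 0 = 0
    · right
      have h1 : P.rep 1 ≠ 0 := fun h1 => hr (by ext i; fin_cases i <;> simp [h0, h1])
      exact ⟨h1, by rw [h0, zero_div]; exact A.zero_mem⟩
    · by_cases h1 : P.rep 1 = 0
      · left; exact ⟨h0, by rw [h1, zero_div]; exact A.zero_mem⟩
      · rcases A.mem_or_inv_mem (P.rep 1 / P.rep 0) with h | h
        · exact Or.inl ⟨h0, h⟩
        · rw [inv_div] at h; exact Or.inr ⟨h1, h⟩
  rcases hcase with ⟨h0, h⟩ | ⟨h0, h⟩
  · refine ⟨![1, ⟨_, h⟩], Or.inl (by simp), tp_uni_ne A _ (Or.inl (by simp)), ?_⟩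
    refine hP.symm.trans ?_
    refine (Projectivization.mk_eq_mk_iff' K _ _ _ _).2 ⟨P.rep 0, ?_⟩
    ext i; fin_cases i
    · simp
    · simp; field_simp
  · refine ⟨![⟨_, h⟩, 1], Or.inr (by simp), tp_uni_ne A _ (Or.inr (by simp)), ?_⟩
    refine hP.symm.trans ?_
    refine (Projectivization.mk_eq_mk_iff' K _ _ _ _).2 ⟨P.rep 1, ?_⟩
    ext i; fin_cases i
    · simp; field_simp
    · simp

theorem tp_rep_unique {K : Type*} [Field K] (A : ValuationSubring K) (P : P1 K) (x y : Fin 2 → A)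
    (hx : tpRep A P x) (hy : tpRep A P y) : ∃ u : A, IsUnit u ∧ ∀ i, x i = u * y i := by
  obtain ⟨hxu, hx0, hxP⟩ := hx
  obtain ⟨hyu, hy0, hyP⟩ := hy
  obtain ⟨a, ha⟩ := (Projectivization.mk_eq_mk_iff' K _ _ _ _).1 (hxP.symm.trans hyP)
  have a0 : a * (y 0 : K) = x 0 := by simpa using congrFun ha 0
  have a1 : a * (y 1 : K) = x 1 := by simpa using congrFun ha 1
  have hne : a ≠ 0 := by
    rintro rfl
    simp only [zero_mul] at a0 a1
    exact hx0 (by ext i; fin_cases i <;> simp [← a0, ← a1])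
  have hmem : ∀ (b : K) (s t : A), IsUnit s → b * s = t → b ∈ A := by
    rintro b s t ⟨u, rfl⟩ h
    have : b = ((t * (u⁻¹ : Aˣ) : A) : K) := by
      push_cast
      rw [← h, mul_assoc]
      have : ((u : A) : K) * ((u⁻¹ : Aˣ) : A) = 1 := by
        rw [← MulMemClass.coe_mul]; simp
      rw [this, mul_one]
    rw [this]; exact Subtype.coe_prop _
  have hA : a ∈ A := by
    rcases hyu with h | h
    · exact hmem a _ _ h a0
    · exact hmem a _ _ h a1
  have hA' : a⁻¹ ∈ A := by
    rcases hxu with h | h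
    · exact hmem a⁻¹ _ (y 0) h (by rw [← a0]; field_simp)
    · exact hmem a⁻¹ _ (y 1) h (by rw [← a1]; field_simp)
  refine ⟨⟨a, hA⟩, IsUnit.of_mul_eq_one ⟨a⁻¹, hA'⟩ (Subtype.ext (by simp [hne])), ?_⟩
  intro i
  apply Subtype.ext
  fin_cases i
  · simp [a0]
  · simp [a1]

theorem tp_rep_smul {K : Type*} [Field K] (A : ValuationSubring K) (P : P1 K) (x : Fin 2 → A)
    (hx : tpRep A P x) (u : A) (hu : IsUnit u) : tpRep A P (fun i => u * x i) := by
  obtain ⟨hxu, hx0, hxP⟩ := hx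
  have h : IsUnit (u * x 0) ∨ IsUnit (u * x 1) := hxu.imp hu.mul hu.mul
  refine ⟨h, tp_uni_ne A (fun i => u * x i) h, ?_⟩
  rw [hxP]
  symm
  refine (Projectivization.mk_eq_mk_iff' K _ _ _ _).2 ⟨(u : K), ?_⟩
  ext i; fin_cases i <;> simp

/-- Non-congruent points have unit cross product. -/
theorem tp_cross_unit {K : Type*} [Field K] (A : ValuationSubring K) (P Q : P1 K) (x y : Fin 2 → A)
    (hx : tpRep A P x) (hy : tpRep A Q y) (h : ¬ tpCong A P Q) :
    IsUnit (x 0 * y 1 - x 1 * y 0) := by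
  by_contra hnu
  apply h
  have hres : IsLocalRing.residue A (x 0 * y 1 - x 1 * y 0) = 0 := by
    rw [IsLocalRing.residue_eq_zero_iff]; exact hnu
  simp only [map_sub, map_mul, sub_eq_zero] at hres
  -- the scaling factor
  have : ∃ c : A, IsUnit c ∧ ∀ i, IsLocalRing.residue A (x i) =
      IsLocalRing.residue A c * IsLocalRing.residue A (y i) := by
    have hu : ∀ a : A, IsUnit a ↔ IsLocalRing.residue A a ≠ 0 := fun a => by
      rw [IsLocalRing.residue_ne_zero_iff_isUnit]
    have hxu := hx.1
    have hyu := hy.1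
    simp only [hu] at hxu hyu ⊢
    set ρ := IsLocalRing.residue A with hρ
    have hsurj : Function.Surjective ρ := IsLocalRing.residue_surjective
    by_cases hy0 : ρ (y 0) = 0
    · have hy1 : ρ (y 1) ≠ 0 := by tauto
      have hx0 : ρ (x 0) = 0 := by
        rw [hy0, mul_zero] at hres
        exact (mul_eq_zero.1 hres).resolve_right hy1
      have hx1 : ρ (x 1) ≠ 0 := by tauto
      obtain ⟨c, hc⟩ := hsurj (ρ (x 1) / ρ (y 1))
      refine ⟨c, by rw [hc]; exact div_ne_zero hx1 hy1, ?_⟩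
      intro i
      rw [hc]
      fin_cases i
      · simp [hx0, hy0]
      · simp only [Fin.mk_one]; field_simp
    · have hx0 : ρ (x 0) ≠ 0 := by
        intro hx0
        rw [hx0, zero_mul] at hres
        have := (mul_eq_zero.1 hres.symm).resolve_right hy0
        tauto
      obtain ⟨c, hc⟩ := hsurj (ρ (x 0) / ρ (y 0))
      refine ⟨c, by rw [hc]; exact div_ne_zero hx0 hy0, ?_⟩
      intro i
      rw [hc]
      fin_cases i
      · simp only [Fin.zero_eta]; field_simp
      · simp only [Fin.mk_one]; field_simp; rw [hres]
  obtain ⟨c, hc, hci⟩ := this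
  exact ⟨x, fun i => c * y i, hx, tp_rep_smul A Q y hy c hc, fun i => by rw [hci i, map_mul]⟩

theorem tp_res_eval {K : Type*} [Field K] (A : ValuationSubring K) (x y : Fin 2 → A)
    (h : ∀ i, IsLocalRing.residue A (x i) = IsLocalRing.residue A (y i))
    (H : MvPolynomial (Fin 2) A) :
    IsLocalRing.residue A (eval x H) = IsLocalRing.residue A (eval y H) := by
  have e : ∀ z : Fin 2 → A, IsLocalRing.residue A (eval z H) =
      eval₂ (IsLocalRing.residue A) (fun i => IsLocalRing.residue A (z i)) H := fun z => by
    rw [eval, coe_eval₂Hom, hom_eval₂, RingHom.comp_id]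
  rw [e, e]
  simp only [h]

/-- The map preserves congruence. -/
theorem tp_cong_map {K : Type*} [Field K] (A : ValuationSubring K) (f : P1 K → P1 K) (d : ℕ)
    (hf : tpModel A f d) (P Q : P1 K) (h : tpCong A P Q) : tpCong A (f P) (f Q) := by
  obtain ⟨F₀, G₀, hF, hG, hfr⟩ := hf
  obtain ⟨x, y, hx, hy, hxy⟩ := h
  refine ⟨_, _, hfr P x hx, hfr Q y hy, ?_⟩
  intro i
  fin_cases i
  · exact tp_res_eval A x y hxy F₀
  · exact tp_res_eval A x y hxy G₀

theorem tp_hom_aeval {R S : Type*} [CommRing R] [CommRing S] [Algebra R S] {d : ℕ}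
    (H : MvPolynomial (Fin 2) R) (hH : H.IsHomogeneous d) (t : S) (g : Fin 2 → S) :
    aeval (fun i => t * g i) H = t ^ d * aeval g H := by
  rw [aeval_def, aeval_def, eval₂_eq', eval₂_eq', Finset.mul_sum]
  apply Finset.sum_congr rfl
  intro m hm
  have := hH (mem_support_iff.1 hm)
  rw [Finsupp.weight_apply, Finsupp.sum_fintype] at this
  · simp only [Fin.sum_univ_two, Pi.one_apply, smul_eq_mul, mul_one] at this
    simp only [Fin.prod_univ_two, mul_pow]
    rw [← this]; ring
  · simp

theorem tp_dvd {R : Type*} [CommRing R] {d : ℕ} (H : MvPolynomial (Fin 2) R)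
    (hH : H.IsHomogeneous d) (p : Fin 2 → R) (hp : IsUnit (p 0) ∨ IsUnit (p 1))
    (h0 : eval p H = 0) : (C (p 1) * X 0 - C (p 0) * X 1 : MvPolynomial (Fin 2) R) ∣ H := by
  rw [← Ideal.mem_span_singleton, ← Ideal.Quotient.eq_zero_iff_mem]
  set I := Ideal.span {(C (p 1) * X 0 - C (p 0) * X 1 : MvPolynomial (Fin 2) R)} with hI
  have hrel : Ideal.Quotient.mk I (C (p 1)) * Ideal.Quotient.mk I (X 0) =
      Ideal.Quotient.mk I (C (p 0)) * Ideal.Quotient.mk I (X 1) := by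
    rw [← map_mul, ← map_mul, Ideal.Quotient.eq]
    exact Ideal.mem_span_singleton_self _
  have hC : ∀ a : R, Ideal.Quotient.mk I (C a) = algebraMap R (MvPolynomial (Fin 2) R ⧸ I) a :=
    fun a => rfl
  rw [hC, hC] at hrel
  have ht : ∃ t, ∀ i, Ideal.Quotient.mk I (X i) = t * algebraMap R (MvPolynomial (Fin 2) R ⧸ I) (p i) := by
    rcases hp with ⟨u, hu⟩ | ⟨u, hu⟩
    · have hu1 : algebraMap R (MvPolynomial (Fin 2) R ⧸ I) (p 0) *
          algebraMap R _ ((u⁻¹ : Rˣ) : R) = 1 := by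
        rw [← map_mul, ← hu]; simp
      refine ⟨algebraMap R _ ((u⁻¹ : Rˣ) : R) * Ideal.Quotient.mk I (X 0), ?_⟩
      intro i; fin_cases i
      · simp only [Fin.zero_eta]; linear_combination (-Ideal.Quotient.mk I (X 0)) * hu1
      · simp only [Fin.mk_one]
        linear_combination (-Ideal.Quotient.mk I (X 1)) * hu1 - algebraMap R _ ((u⁻¹ : Rˣ) : R) * hrel
    · have hu1 : algebraMap R (MvPolynomial (Fin 2) R ⧸ I) (p 1) *
          algebraMap R _ ((u⁻¹ : Rˣ) : R) = 1 := by
        rw [← map_mul, ← hu]; simp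
      refine ⟨algebraMap R _ ((u⁻¹ : Rˣ) : R) * Ideal.Quotient.mk I (X 1), ?_⟩
      intro i; fin_cases i
      · simp only [Fin.zero_eta]
        linear_combination (-Ideal.Quotient.mk I (X 0)) * hu1 + algebraMap R _ ((u⁻¹ : Rˣ) : R) * hrel
      · simp only [Fin.mk_one]; linear_combination (-Ideal.Quotient.mk I (X 1)) * hu1
  obtain ⟨t, ht⟩ := ht
  have e : Ideal.Quotient.mk I H = aeval (fun i => Ideal.Quotient.mk I (X i)) H := by
    have := MvPolynomial.comp_aeval_apply (fun i => (X i : MvPolynomial (Fin 2) R)) (Ideal.Quotient.mkₐ R I) H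
    rw [aeval_X_left_apply] at this
    exact this
  rw [e]
  simp only [ht]
  rw [tp_hom_aeval H hH]
  have e2 : aeval (fun i => algebraMap R (MvPolynomial (Fin 2) R ⧸ I) (p i)) H =
      algebraMap R _ (eval p H) := by
    rw [← MvPolynomial.coe_aeval_eq_eval]
    exact MvPolynomial.aeval_algebraMap_apply _ _ _
  rw [e2, h0, map_zero, mul_zero]

/-- The key local fact. -/
theorem tp_key {K : Type*} [Field K] (A : ValuationSubring K) (f : P1 K → P1 K) (d : ℕ)
    (hf : tpModel A f d) (e e' q : P1 K) (he : f e = e') (he' : f e' = e) (hne : e ≠ e')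
    (hq : f q = e) (hqe : q ≠ e') : ¬ tpCong A q e := by
  rintro ⟨y, x, hy, hx, hxy⟩
  obtain ⟨F₀, G₀, hF, hG, hfr⟩ := hf
  obtain ⟨p, hp⟩ := tp_rep_exists A e'
  have hcross : ∀ (P Q : P1 K) (a b : Fin 2 → A), tpRep A P a → tpRep A Q b → P ≠ Q →
      b 1 * a 0 - b 0 * a 1 ≠ 0 := by
    intro P Q a b ha hb hPQ h
    apply hPQ
    obtain ⟨hau, ha0, haP⟩ := ha
    obtain ⟨hbu, hb0, hbP⟩ := hb
    rw [haP, hbP]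
    have hK : (b 1 : K) * a 0 = b 0 * a 1 := by
      have := congrArg (Subtype.val) (sub_eq_zero.1 h)
      simpa using this
    refine (Projectivization.mk_eq_mk_iff' K _ _ _ _).2 ?_
    rcases hbu with hu | hu
    · have : (b 0 : K) ≠ 0 := by simpa using hu.ne_zero
      refine ⟨a 0 / b 0, ?_⟩
      ext i; fin_cases i
      · simp; field_simp
      · simp; field_simp; rw [mul_comm, hK]; try ring
    · have : (b 1 : K) ≠ 0 := by simpa using hu.ne_zero
      refine ⟨a 1 / b 1, ?_⟩
      ext i; fin_cases i
      · simp; field_simp; rw [mul_comm, ← hK]; try ring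
      · simp; field_simp
  obtain ⟨u, hu, hux⟩ := tp_rep_unique A e' _ p (he ▸ hfr e x hx) hp
  obtain ⟨w, hw, hwp⟩ := tp_rep_unique A e _ x (he' ▸ hfr e' p hp) hx
  obtain ⟨z, hz, hzy⟩ := tp_rep_unique A e _ x (hq ▸ hfr q y hy) hx
  have hu0 := hux 0; have hu1 := hux 1
  have hw0 := hwp 0; have hw1 := hwp 1
  have hz0 := hzy 0; have hz1 := hzy 1
  simp only [Matrix.cons_val_zero, Matrix.cons_val_one] at hu0 hu1 hw0 hw1 hz0 hz1
  let H : MvPolynomial (Fin 2) A := C (x 1) * F₀ - C (x 0) * G₀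
  have hHe : ∀ a, eval a H = x 1 * eval a F₀ - x 0 * eval a G₀ := fun a => by simp [H]
  have hHh : H.IsHomogeneous d := by
    have h1 := (isHomogeneous_C (Fin 2) (x 1)).mul hF
    have h2 := (isHomogeneous_C (Fin 2) (x 0)).mul hG
    rw [zero_add] at h1 h2
    exact h1.sub h2
  obtain ⟨H1, hH1⟩ := tp_dvd H hHh p hp.1 (by rw [hHe, hw0, hw1]; ring)
  have hL : ∀ a, eval a H = (p 1 * a 0 - p 0 * a 1) * eval a H1 := fun a => by
    rw [hH1]; simp
  have hy1 : eval y H1 = 0 := by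
    have := hL y
    rw [hHe, hz0, hz1] at this
    have h0 : (p 1 * y 0 - p 0 * y 1) * eval y H1 = 0 := by rw [← this]; ring
    exact (mul_eq_zero.1 h0).resolve_left (hcross q e' y p hy hp hqe)
  have hx1 : eval x H1 = -u := by
    have := hL x
    rw [hHe, hu0, hu1] at this
    apply mul_left_cancel₀ (hcross e e' x p hx hp hne)
    rw [← this]; ring
  have hr := tp_res_eval A y x hxy H1
  rw [hy1, hx1, map_zero] at hr
  have := (IsLocalRing.residue_ne_zero_iff_isUnit _).2 hu.neg
  exact this hr.symm

theorem tp_model_aux {K : Type*} [Field K] {d : ℕ} (φ : P1Map K d)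
    (A : ValuationSubring K) (c : K) (hc : c ≠ 0) (F₀ G₀ : MvPolynomial (Fin 2) A)
    (hF : MvPolynomial.map A.subtype F₀ = C c * φ.F)
    (hG : MvPolynomial.map A.subtype G₀ = C c * φ.G)
    (hred : ∀ x y : AlgebraicClosure (IsLocalRing.ResidueField A),
        eval ![x, y] (MvPolynomial.map
          ((algebraMap (IsLocalRing.ResidueField A) (AlgebraicClosure _)).comp
            (IsLocalRing.residue _)) F₀) = 0 →
        eval ![x, y] (MvPolynomial.map
          ((algebraMap (IsLocalRing.ResidueField A) (AlgebraicClosure _)).comp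
            (IsLocalRing.residue _)) G₀) = 0 →
        x = 0 ∧ y = 0) :
    tpModel A φ.toFun d := by
  have hinj : Function.Injective A.subtype := Subtype.val_injective
  have hom : ∀ Q : MvPolynomial (Fin 2) K, Q.IsHomogeneous d → (C c * Q).IsHomogeneous d :=
    fun Q hQ => by
      have := (isHomogeneous_C (Fin 2) c).mul hQ
      rwa [zero_add] at this
  refine ⟨F₀, G₀, IsHomogeneous.of_map hinj (hF ▸ hom _ φ.homF),
    IsHomogeneous.of_map hinj (hG ▸ hom _ φ.homG), ?_⟩
  rintro P x ⟨hxu, hx0, rfl⟩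
  have hev : ∀ (Q₀ : MvPolynomial (Fin 2) A) (Q : MvPolynomial (Fin 2) K),
      MvPolynomial.map A.subtype Q₀ = C c * Q →
      ((eval x Q₀ : A) : K) = c * eval ![(x 0 : K), (x 1 : K)] Q := by
    intro Q₀ Q hQ
    have h1 : eval ![(x 0 : K), (x 1 : K)] (MvPolynomial.map A.subtype Q₀) = A.subtype (eval x Q₀) := by
      rw [eval_map, eval, coe_eval₂Hom, hom_eval₂, RingHom.comp_id]
      congr 1
      ext i; fin_cases i <;> rfl
    rw [hQ, map_mul, eval_C] at h1
    exact h1.symm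
  have hu : ∀ a : A, IsUnit a ↔ IsLocalRing.residue A a ≠ 0 := fun a => by
    rw [IsLocalRing.residue_ne_zero_iff_isUnit]
  have huni : IsUnit (eval x F₀) ∨ IsUnit (eval x G₀) := by
    by_contra hcon
    push Not at hcon
    rw [hu, hu, not_not, not_not] at hcon
    let ρ := (algebraMap (IsLocalRing.ResidueField A) (AlgebraicClosure (IsLocalRing.ResidueField A))).comp
            (IsLocalRing.residue A)
    have hρ : ∀ Q₀ : MvPolynomial (Fin 2) A, eval ![ρ (x 0), ρ (x 1)] (MvPolynomial.map ρ Q₀) =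
        ρ (eval x Q₀) := by
      intro Q₀
      rw [eval_map, eval, coe_eval₂Hom, hom_eval₂, RingHom.comp_id]
      congr 1
      ext i; fin_cases i <;> rfl
    have := hred (ρ (x 0)) (ρ (x 1)) ((hρ F₀).trans (by simp [ρ, hcon.1])) ((hρ G₀).trans (by simp [ρ, hcon.2]))
    simp only [ρ, RingHom.comp_apply, map_eq_zero] at this
    rw [hu, hu] at hxu
    tauto
  have huni' : IsUnit ((![eval x F₀, eval x G₀] : Fin 2 → A) 0) ∨
    IsUnit ((![eval x F₀, eval x G₀] : Fin 2 → A) 1) := huni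
  have hne := tp_uni_ne A _ huni'
  have hne2 : ![eval ![(x 0 : K), (x 1 : K)] φ.F, eval ![(x 0 : K), (x 1 : K)] φ.G] ≠ 0 := by
    intro h0
    apply hne
    have e0 := congrFun h0 0
    have e1 := congrFun h0 1
    simp only [Matrix.cons_val_zero, Matrix.cons_val_one, Pi.zero_apply] at e0 e1
    ext i; fin_cases i
    · simp [hev _ _ hF, e0]
    · simp [hev _ _ hG, e1]
  refine ⟨huni', hne, ?_⟩
  rw [φ.compat _ _ hx0 hne2]
  symm
  refine (Projectivization.mk_eq_mk_iff' K _ _ _ _).2 ⟨c, ?_⟩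
  ext i; fin_cases i
  · simp [hev _ _ hF]
  · simp [hev _ _ hG]

theorem tp_model {K : Type*} [Field K] [NumberField K] {d : ℕ} (φ : P1Map K d)
    (v : HeightOneSpectrum (𝓞 K)) (h : GoodReductionAt φ v) :
    tpModel (v.valuation (K := K)).valuationSubring φ.toFun d := by
  obtain ⟨c, hc, F₀, G₀, hF, hG, -, hred⟩ := h
  exact tp_model_aux φ _ c hc F₀ G₀ hF hG hred

/-- Affine coordinate. -/
noncomputable def tpAff {K : Type*} [Field K] (P : P1 K) : K := P.rep 0 / P.rep 1

theorem tp_inf_unique {K : Type*} [Field K] (P Q : P1 K) (hP : P.rep 1 = 0) (hQ : Q.rep 1 = 0) :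
    P = Q := by
  have hp0 : P.rep 0 ≠ 0 := fun h => P.rep_nonzero (by ext i; fin_cases i <;> simp [h, hP])
  have hq0 : Q.rep 0 ≠ 0 := fun h => Q.rep_nonzero (by ext i; fin_cases i <;> simp [h, hQ])
  rw [← P.mk_rep, ← Q.mk_rep]
  refine (Projectivization.mk_eq_mk_iff' K _ _ _ _).2 ⟨P.rep 0 / Q.rep 0, ?_⟩
  ext i; fin_cases i
  · simp; field_simp
  · simp [hP, hQ]

theorem tp_aff_inj {K : Type*} [Field K] (P Q : P1 K) (hP : P.rep 1 ≠ 0) (hQ : Q.rep 1 ≠ 0)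
    (h : tpAff P = tpAff Q) : P = Q := by
  rw [← P.mk_rep, ← Q.mk_rep]
  refine (Projectivization.mk_eq_mk_iff' K _ _ _ _).2 ⟨P.rep 1 / Q.rep 1, ?_⟩
  unfold tpAff at h
  rw [div_eq_div_iff hP hQ] at h
  ext i; fin_cases i
  · simp; field_simp; linear_combination -h
  · simp; field_simp

theorem tp_rep_aff {K : Type*} [Field K] (A : ValuationSubring K) (P : P1 K) (x : Fin 2 → A)
    (hx : tpRep A P x) (hP : P.rep 1 ≠ 0) : (x 1 : K) ≠ 0 ∧ tpAff P * (x 1 : K) = x 0 := by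
  obtain ⟨hxu, hx0, hxP⟩ := hx
  obtain ⟨a, ha⟩ := (Projectivization.mk_eq_mk_iff' K _ _ _ _).1 (P.mk_rep.trans hxP)
  have a0 : a * (x 0 : K) = P.rep 0 := by simpa using congrFun ha 0
  have a1 : a * (x 1 : K) = P.rep 1 := by simpa using congrFun ha 1
  have hx1 : (x 1 : K) ≠ 0 := fun h => hP (by rw [← a1, h, mul_zero])
  refine ⟨hx1, ?_⟩
  unfold tpAff
  rw [div_mul_eq_mul_div, div_eq_iff hP, ← a0, ← a1]; ring

theorem tp_fp_unit {K : Type*} [Field K] [NumberField K] (v : HeightOneSpectrum (𝓞 K))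
    (u : (v.valuation (K := K)).valuationSubring) (hu : IsUnit u) :
    FinitePlace.mk v (u : K) = 1 := by
  have h : v.valuation K (u : K) = 1 := by
    obtain ⟨w, hw⟩ := hu.exists_right_inv
    have hw' : (u : K) * (w : K) = 1 := by rw [← MulMemClass.coe_mul, hw]; rfl
    have h1 : v.valuation K (u : K) ≤ 1 := u.2
    have h2 : v.valuation K (w : K) ≤ 1 := w.2
    have h3 : v.valuation K (u : K) * v.valuation K (w : K) = 1 := by
      rw [← map_mul, hw', map_one]
    apply le_antisymm h1
    calc (1 : WithZero (Multiplicative ℤ)) = v.valuation K (u : K) * v.valuation K (w : K) := h3.symm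
      _ ≤ v.valuation K (u : K) * 1 := by gcongr
      _ = _ := mul_one _
  rw [FinitePlace.mk_apply, FinitePlace.norm_embedding, HeightOneSpectrum.adicAbv_def, h]
  simp

theorem tp_cross_fp {K : Type*} [Field K] [NumberField K] (v : HeightOneSpectrum (𝓞 K)) :
    ∃ w : P1 K → ℝ, ∀ P Q : P1 K, P.rep 1 ≠ 0 → Q.rep 1 ≠ 0 →
      ¬ tpCong (v.valuation (K := K)).valuationSubring P Q →
      FinitePlace.mk v (tpAff P - tpAff Q) = (w P * w Q)⁻¹ := by
  choose x hx using tp_rep_exists (v.valuation (K := K)).valuationSubring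
  refine ⟨fun P => FinitePlace.mk v (x P 1 : K), ?_⟩
  intro P Q hP hQ hc
  have hu := tp_fp_unit v _ (tp_cross_unit _ P Q _ _ (hx P) (hx Q) hc)
  obtain ⟨h1, h2⟩ := tp_rep_aff _ P _ (hx P) hP
  obtain ⟨k1, k2⟩ := tp_rep_aff _ Q _ (hx Q) hQ
  have e : (((x P 0 * x Q 1 - x P 1 * x Q 0 : (v.valuation (K := K)).valuationSubring)) : K) =
      (tpAff P - tpAff Q) * ((x P 1 : K) * (x Q 1 : K)) := by
    push_cast
    rw [← h2, ← k2]; ring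
  rw [e, map_mul, map_mul] at hu
  exact eq_inv_of_mul_eq_one_left hu

theorem tp_two_sets {K : Type*} [Field K] [NumberField K] (T : Finset (HeightOneSpectrum (𝓞 K)))
    (X Y : Set (P1 K)) (hXY : Disjoint X Y)
    (h : ∀ v ∉ T, ∀ x ∈ X, ∀ y ∈ Y, ¬ tpCong (v.valuation (K := K)).valuationSubring x y) :
    (X.Finite ∧ X.ncard ≤ 2 * 4000 ^ sCard K T) ∨ (Y.Finite ∧ Y.ncard ≤ 2 * 4000 ^ sCard K T) := by
  by_contra hcon
  push Not at hcon
  have key : ∀ Z : Set (P1 K), (Z.Finite → 2 * 4000 ^ sCard K T < Z.ncard) →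
      ∃ U : Finset (P1 K), (∀ z ∈ U, z ∈ Z ∧ z.rep 1 ≠ 0) ∧ 2 * 4000 ^ sCard K T ≤ U.card := by
    intro Z hZ
    have : ∃ U : Finset (P1 K), ↑U ⊆ Z ∧ 2 * 4000 ^ sCard K T < U.card := by
      by_cases hf : Z.Finite
      · refine ⟨hf.toFinset, by simp, ?_⟩
        rw [← Set.ncard_eq_toFinset_card Z hf]; exact hZ hf
      · obtain ⟨U, hU, hc⟩ := Set.Infinite.exists_subset_card_eq hf (2 * 4000 ^ sCard K T + 1)
        exact ⟨U, hU, by omega⟩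
    obtain ⟨U, hU, hc⟩ := this
    refine ⟨U.filter (fun z => z.rep 1 ≠ 0), fun z hz => ?_, ?_⟩
    · exact ⟨hU (Finset.mem_filter.1 hz).1, (Finset.mem_filter.1 hz).2⟩
    · have h1 := Finset.card_filter_add_card_filter_not (s := U) (fun z => z.rep 1 = 0)
      have h2 : (U.filter (fun z => z.rep 1 = 0)).card ≤ 1 := by
        rw [Finset.card_le_one]
        intro a ha b hb
        exact tp_inf_unique a b (Finset.mem_filter.1 ha).2 (Finset.mem_filter.1 hb).2
      have h3 : (U.filter (fun z => z.rep 1 ≠ 0)).card = (U.filter (fun z => ¬ z.rep 1 = 0)).card := rfl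
      omega
  obtain ⟨U, hU, hUc⟩ := key X hcon.1
  obtain ⟨V, hV, hVc⟩ := key Y hcon.2
  have inj : ∀ W : Finset (P1 K), (∀ z ∈ W, z.rep 1 ≠ 0) → (W.image tpAff).card = W.card :=
    fun W hW => Finset.card_image_of_injOn (fun a ha b hb hab => tp_aff_inj a b (hW a ha) (hW b hb) hab)
  have hcore := tp_core T (U.image tpAff) (V.image tpAff) ?_ ?_
  · rw [inj U (fun z hz => (hU z hz).2), inj V (fun z hz => (hV z hz).2)] at hcore
    unfold sCard at hUc hVc
    omega
  · rw [Finset.disjoint_left]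
    intro t ht ht'
    obtain ⟨a, ha, rfl⟩ := Finset.mem_image.1 ht
    obtain ⟨b, hb, hab⟩ := Finset.mem_image.1 ht'
    have := tp_aff_inj _ _ (hV b hb).2 (hU a ha).2 hab
    exact Set.disjoint_left.1 hXY (hU a ha).1 (this ▸ (hV b hb).1)
  · intro v hv a ha a' ha' b hb b' hb'
    obtain ⟨w, hw⟩ := tp_cross_fp v
    obtain ⟨a, ka, rfl⟩ := Finset.mem_image.1 ha
    obtain ⟨a', ka', rfl⟩ := Finset.mem_image.1 ha'
    obtain ⟨b, kb, rfl⟩ := Finset.mem_image.1 hb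
    obtain ⟨b', kb', rfl⟩ := Finset.mem_image.1 hb'
    have hh : ∀ p ∈ U, ∀ q ∈ V, FinitePlace.mk v (tpAff p - tpAff q) = (w p * w q)⁻¹ :=
      fun p hp q hq => hw p q (hU p hp).2 (hV q hq).2 (h v hv p (hU p hp).1 q (hV q hq).1)
    rw [map_mul, map_mul, hh a ka b kb, hh a' ka' b' kb', hh a ka b' kb', hh a' ka' b kb]
    simp only [mul_inv]; ring

/-- Points of level `n` over `e`. -/
def tpLev {α : Type*} (f : α → α) (e e' : α) (n : ℕ) : Set α :=
  {Q | f^[n] Q = e ∧ ∀ m < n, f^[m] Q ≠ e ∧ f^[m] Q ≠ e'}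

theorem tp_lev_noncong {K : Type*} [Field K] (A : ValuationSubring K) (f : P1 K → P1 K) (d : ℕ)
    (hf : tpModel A f d) (e e' : P1 K) (he : f e = e') (he' : f e' = e) (hne : e ≠ e')
    (m n : ℕ) (hmn : m < n) (hodd : Odd (m + n)) (x y : P1 K) (hx : x ∈ tpLev f e e' m)
    (hy : y ∈ tpLev f e e' n) : ¬ tpCong A y x := by
  intro hc
  obtain ⟨k, rfl⟩ : ∃ k, n = m + 2 * k + 1 := by
    obtain ⟨j, hj⟩ := hodd
    exact ⟨j - m, by omega⟩
  have hit : ∀ j, tpCong A (f^[j] y) (f^[j] x) := by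
    intro j
    induction j with
    | zero => exact hc
    | succ j ih =>
      rw [Function.iterate_succ_apply', Function.iterate_succ_apply']
      exact tp_cong_map A f d hf _ _ ih
  have hper : ∀ j, f^[2 * j] e = e := by
    intro j
    rw [Function.iterate_mul]
    have : f^[2] e = e := by simp [he, he']
    exact Function.iterate_fixed this j
  have h1 := hit (2 * k + m)
  rw [Function.iterate_add_apply f (2 * k) m x, hx.1, hper] at h1
  refine tp_key A f d hf e e' _ he he' hne ?_ ?_ h1
  · rw [← Function.iterate_succ_apply' f]
    have := hy.1
    rwa [show m + 2 * k + 1 = (2 * k + m).succ by omega] at this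
  · exact (hy.2 (2 * k + m) (by omega)).2

theorem tp_eval_aeval {K L : Type*} [Field K] [Field L] [Algebra K L] (G : MvPolynomial (Fin 2) K)
    (p q : Polynomial L) (a : L) :
    (aeval ![p, q] G).eval a = aeval ![p.eval a, q.eval a] G := by
  have := MvPolynomial.comp_aeval_apply (R := K) ![p, q]
    ((Polynomial.aeval a : Polynomial L →ₐ[L] L).restrictScalars K) G
  have e : (fun i => ((Polynomial.aeval a : Polynomial L →ₐ[L] L).restrictScalars K) (![p, q] i)) =
      ![p.eval a, q.eval a] := by
    ext i; fin_cases i <;> simp [Polynomial.aeval_def, Polynomial.eval₂_eq_eval_map]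
  rw [e] at this
  rw [← this]
  simp [Polynomial.aeval_def, Polynomial.eval₂_eq_eval_map]

theorem tp_poly_zero {L : Type*} [Field L] [Infinite L] (g : Polynomial L)
    (h : ∀ y, y ≠ 0 → g.eval y = 0) : g = 0 := by
  apply Polynomial.eq_zero_of_infinite_isRoot
  refine Set.Infinite.mono (s := {(0 : L)}ᶜ) (fun y hy => h y hy) ?_
  exact (Set.finite_singleton (0 : L)).infinite_compl

theorem tp_hom2 {K L : Type*} [Field K] [Field L] [Algebra K L] {d : ℕ} (G : MvPolynomial (Fin 2) K)
    (hG : G.IsHomogeneous d) (x y : L) (hy : y ≠ 0) :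
    aeval ![x, y] G = y ^ d * aeval ![x / y, 1] G := by
  rw [← tp_hom_aeval G hG]
  congr 2
  ext i; fin_cases i
  · simp; field_simp
  · simp

theorem tp_hom_vanish {K L : Type*} [Field K] [Field L] [Algebra K L] [Infinite L] {d : ℕ}
    (H : MvPolynomial (Fin 2) K) (hH : H.IsHomogeneous d) (h : ∀ x : L, aeval ![x, 1] H = 0)
    (x y : L) : aeval ![x, y] H = 0 := by
  have h1 : ∀ y : L, y ≠ 0 → aeval ![x, y] H = 0 := fun y hy => by
    rw [tp_hom2 H hH x y hy, h, mul_zero]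
  have h2 : (aeval ![Polynomial.C x, Polynomial.X] H : Polynomial L) = 0 := by
    apply tp_poly_zero
    intro y hy
    rw [tp_eval_aeval, Polynomial.eval_C, Polynomial.eval_X]
    exact h1 y hy
  have := tp_eval_aeval H (Polynomial.C x) Polynomial.X y
  rw [h2, Polynomial.eval_C, Polynomial.eval_X, Polynomial.eval_zero] at this
  exact this.symm

theorem tp_hom_zero {K L : Type*} [Field K] [Field L] [Algebra K L] [IsAlgClosed L] {d : ℕ} (hd : d ≠ 0)
    (G : MvPolynomial (Fin 2) K) (hG : G.IsHomogeneous d) :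
    ∃ x y : L, ¬ (x = 0 ∧ y = 0) ∧ aeval ![x, y] G = 0 := by
  by_contra hcon
  push Not at hcon
  have : Infinite L := IsAlgClosed.instInfinite
  let g : Polynomial L := aeval ![Polynomial.X, 1] G
  have hg : ∀ a, g.eval a = aeval ![a, 1] G := fun a => by
    simp only [g]; rw [tp_eval_aeval]; simp
  have hdeg : g.degree = 0 := by
    by_contra hne
    obtain ⟨a, ha⟩ := IsAlgClosed.exists_root g hne
    rw [Polynomial.IsRoot, hg] at ha
    exact hcon a 1 (fun _ => one_ne_zero) ha
  rw [Polynomial.eq_C_of_degree_eq_zero hdeg] at hg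
  set c := g.coeff 0
  simp only [Polynomial.eval_C] at hg
  have h2 : (aeval ![Polynomial.C 1, Polynomial.X] G - Polynomial.C c * Polynomial.X ^ d : Polynomial L) = 0 := by
    apply tp_poly_zero
    intro y hy
    rw [Polynomial.eval_sub, tp_eval_aeval, Polynomial.eval_C, Polynomial.eval_X, tp_hom2 G hG _ _ hy, ← hg]
    simp; ring
  have h3 := tp_eval_aeval G (Polynomial.C (1 : L)) Polynomial.X 0
  rw [sub_eq_zero.1 h2, Polynomial.eval_C, Polynomial.eval_X] at h3
  refine hcon 1 0 (fun h => absurd h one_ne_zero) ?_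
  rw [← h3]; simp [hd]

theorem tp_aeval_coe {K L : Type*} [Field K] [Field L] [Algebra K L] (F : MvPolynomial (Fin 2) K)
    (x y : K) : aeval ![algebraMap K L x, algebraMap K L y] F = algebraMap K L (eval ![x, y] F) := by
  rw [← MvPolynomial.coe_aeval_eq_eval]
  have := MvPolynomial.aeval_algebraMap_apply L ![x, y] F
  refine Eq.trans ?_ this
  congr 2
  ext i; fin_cases i <;> rfl

theorem tp_phi_eq {K : Type*} [Field K] {d : ℕ} (φ : P1Map K d) (Q t : P1 K)
    (h : φ.toFun Q = t) :
    t.rep 1 * eval ![Q.rep 0, Q.rep 1] φ.F - t.rep 0 * eval ![Q.rep 0, Q.rep 1] φ.G = 0 := by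
  have e : Q.rep = ![Q.rep 0, Q.rep 1] := by ext i; fin_cases i <;> rfl
  have hq : ![Q.rep 0, Q.rep 1] ≠ 0 := e ▸ Q.rep_nonzero
  have hFG : ![eval ![Q.rep 0, Q.rep 1] φ.F, eval ![Q.rep 0, Q.rep 1] φ.G] ≠ 0 := by
    intro h0
    have e0 := congrFun h0 0
    have e1 := congrFun h0 1
    simp only [Matrix.cons_val_zero, Matrix.cons_val_one, Pi.zero_apply] at e0 e1
    have := φ.coprime (algebraMap K _ (Q.rep 0)) (algebraMap K _ (Q.rep 1))
      (by rw [tp_aeval_coe, e0, map_zero]) (by rw [tp_aeval_coe, e1, map_zero])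
    simp only [map_eq_zero] at this
    exact hq (by ext i; fin_cases i <;> simp [this.1, this.2])
  have hQ : Q = Projectivization.mk K ![Q.rep 0, Q.rep 1] hq := by
    conv_lhs => rw [← Q.mk_rep]
    congr 1
  have h1 := φ.compat _ _ hq hFG
  rw [← hQ, h] at h1
  obtain ⟨a, ha⟩ := (Projectivization.mk_eq_mk_iff' K _ _ t.rep_nonzero hFG).1 (t.mk_rep.trans h1)
  rw [← ha]
  simp; ring

theorem tp_fiber {K : Type*} [Field K] [NumberField K] {d : ℕ} (hd : d ≠ 0) (φ : P1Map K d) (t : P1 K) :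
    (φ.toFun ⁻¹' {t}).Finite ∧ (φ.toFun ⁻¹' {t}).ncard ≤ d + 1 := by
  have : Infinite K := inferInstance
  let H : MvPolynomial (Fin 2) K := C (t.rep 1) * φ.F - C (t.rep 0) * φ.G
  have hHh : H.IsHomogeneous d := by
    have h1 := (isHomogeneous_C (Fin 2) (t.rep 1)).mul φ.homF
    have h2 := (isHomogeneous_C (Fin 2) (t.rep 0)).mul φ.homG
    rw [zero_add] at h1 h2
    exact h1.sub h2
  let g : Polynomial K := aeval ![Polynomial.X, 1] H
  have hg0 : g ≠ 0 := by
    intro hg0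
    have hv : ∀ x y : K, aeval ![x, y] H = 0 := by
      apply tp_hom_vanish H hHh
      intro x
      have := tp_eval_aeval H Polynomial.X 1 x
      rw [show (aeval ![Polynomial.X, 1] H : Polynomial K) = 0 from hg0] at this
      simpa using this.symm
    have hH0 : H = 0 := by
      apply hHh.eq_zero_of_forall_eval_eq_zero
      intro r
      have e : r = ![r 0, r 1] := by ext i; fin_cases i <;> rfl
      rw [e, ← MvPolynomial.coe_aeval_eq_eval]
      exact hv _ _
    let L := AlgebraicClosure K
    have hL : ∀ x y : L, algebraMap K L (t.rep 1) * aeval ![x, y] φ.F =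
        algebraMap K L (t.rep 0) * aeval ![x, y] φ.G := by
      intro x y
      have := congrArg (aeval ![x, y]) hH0
      simp only [H, map_sub, map_mul, map_zero, aeval_C, sub_eq_zero] at this
      exact this
    by_cases ht : t.rep 1 = 0
    · have ht0 : t.rep 0 ≠ 0 := fun h => t.rep_nonzero (by ext i; fin_cases i <;> simp [h, ht])
      obtain ⟨x, y, hxy, hz⟩ := tp_hom_zero (L := L) hd φ.F φ.homF
      apply hxy
      refine φ.coprime x y hz ?_
      have := hL x y
      rw [hz, mul_zero] at this
      exact (mul_eq_zero.1 this.symm).resolve_left (by simpa using ht0)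
    · obtain ⟨x, y, hxy, hz⟩ := tp_hom_zero (L := L) hd φ.G φ.homG
      apply hxy
      refine φ.coprime x y ?_ hz
      have := hL x y
      rw [hz, mul_zero] at this
      exact (mul_eq_zero.1 this).resolve_left (by simpa using ht)
  have hgd : g.natDegree ≤ d := by
    simp only [g]
    rw [aeval_def, eval₂_eq']
    apply Polynomial.natDegree_sum_le_of_forall_le
    intro m hm
    have := hHh (mem_support_iff.1 hm)
    rw [Finsupp.weight_apply, Finsupp.sum_fintype] at this
    · simp only [Fin.sum_univ_two, Pi.one_apply, smul_eq_mul, mul_one] at this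
      simp only [Fin.prod_univ_two, Matrix.cons_val_zero, Matrix.cons_val_one, one_pow, mul_one]
      rw [Polynomial.algebraMap_eq]
      refine (Polynomial.natDegree_C_mul_X_pow_le _ _).trans ?_
      omega
    · simp
  have hsub : φ.toFun ⁻¹' {t} ⊆ {Q | Q.rep 1 = 0} ∪ {Q | Q.rep 1 ≠ 0 ∧ tpAff Q ∈ g.roots.toFinset} := by
    intro Q hQ
    have h1 := tp_phi_eq φ Q t hQ
    by_cases h0 : Q.rep 1 = 0
    · exact Or.inl h0
    · refine Or.inr ⟨h0, ?_⟩
      rw [Multiset.mem_toFinset, Polynomial.mem_roots hg0, Polynomial.IsRoot]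
      simp only [g]
      rw [tp_eval_aeval]
      have h2 : aeval ![Q.rep 0, Q.rep 1] H = 0 := by
        have h3 : eval ![Q.rep 0, Q.rep 1] H = 0 := by simpa [H] using h1
        rwa [← MvPolynomial.coe_aeval_eq_eval] at h3
      rw [tp_hom2 H hHh _ _ h0] at h2
      have := (mul_eq_zero.1 h2).resolve_left (pow_ne_zero _ h0)
      simpa [tpAff] using this
  have hs1 : ({Q : P1 K | Q.rep 1 = 0}).Subsingleton := fun a ha b hb => tp_inf_unique a b ha hb
  have hinj : Set.InjOn tpAff {Q : P1 K | Q.rep 1 ≠ 0 ∧ tpAff Q ∈ g.roots.toFinset} :=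
    fun a ha b hb hab => tp_aff_inj a b ha.1 hb.1 hab
  have hmaps : Set.MapsTo tpAff {Q : P1 K | Q.rep 1 ≠ 0 ∧ tpAff Q ∈ g.roots.toFinset}
      (g.roots.toFinset : Set K) := fun a ha => ha.2
  have hf2 : ({Q : P1 K | Q.rep 1 ≠ 0 ∧ tpAff Q ∈ g.roots.toFinset}).Finite :=
    Set.Finite.of_injOn hmaps hinj (Finset.finite_toSet _)
  have hfin := hs1.finite.union hf2
  refine ⟨hfin.subset hsub, (Set.ncard_le_ncard hsub hfin).trans ?_⟩
  refine (Set.ncard_union_le _ _).trans ?_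
  have : Finite {Q : P1 K | Q.rep 1 = 0} := hs1.finite
  have c1 : ({Q : P1 K | Q.rep 1 = 0}).ncard ≤ 1 := Set.ncard_le_one_iff_subsingleton.2 hs1
  have c2 := Set.ncard_le_ncard_of_injOn tpAff hmaps hinj (Finset.finite_toSet _)
  rw [Set.ncard_coe_finset] at c2
  have c3 := (Multiset.toFinset_card_le g.roots).trans ((Polynomial.card_roots' g).trans hgd)
  omega

theorem tp_preimage {α : Type*} (f : α → α) (k : ℕ)
    (hf : ∀ t, (f ⁻¹' {t}).Finite ∧ (f ⁻¹' {t}).ncard ≤ k) (W : Set α) (hW : W.Finite) :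
    (f ⁻¹' W).Finite ∧ (f ⁻¹' W).ncard ≤ k * W.ncard := by
  have hfin : (f ⁻¹' W).Finite := Set.Finite.preimage' hW (fun b _ => (hf b).1)
  refine ⟨hfin, ?_⟩
  rw [Set.ncard_eq_toFinset_card _ hfin, Set.ncard_eq_toFinset_card _ hW]
  apply Finset.card_le_mul_card_image_of_maps_to (f := f)
  · intro a ha; simpa using ha
  · intro b _
    refine le_trans ?_ (hf b).2
    rw [Set.ncard_eq_toFinset_card _ (hf b).1]
    apply Finset.card_le_card
    intro a ha
    simpa using (Finset.mem_filter.1 ha).2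

theorem tp_side {K : Type*} [Field K] [NumberField K] (T : Finset (HeightOneSpectrum (𝓞 K)))
    {d : ℕ} (hd : 2 ≤ d) (φ : P1Map K d) (hgr : GoodReductionOutside φ T)
    (e e' : P1 K) (he : φ.toFun e = e') (he' : φ.toFun e' = e) (hne : e ≠ e') :
    ({Q | ∃ n, 1 ≤ n ∧ Q ∈ tpLev φ.toFun e e' n}).Finite ∧
    ({Q | ∃ n, 1 ≤ n ∧ Q ∈ tpLev φ.toFun e e' n}).ncard ≤ (d + 2) * (2 * 4000 ^ sCard K T + 1) := by
  set f := φ.toFun with hf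
  set N := 2 * 4000 ^ sCard K T with hN
  let X : Set (P1 K) := {Q | ∃ n, 1 ≤ n ∧ Even n ∧ Q ∈ tpLev f e e' n}
  let Y : Set (P1 K) := {Q | ∃ n, Odd n ∧ Q ∈ tpLev f e e' n}
  have hsub : {Q | ∃ n, 1 ≤ n ∧ Q ∈ tpLev f e e' n} ⊆ X ∪ Y := by
    rintro Q ⟨n, h1, hQ⟩
    rcases Nat.even_or_odd n with h | h
    · exact Or.inl ⟨n, h1, h, hQ⟩
    · exact Or.inr ⟨n, h, hQ⟩
  have hdisj : Disjoint X Y := by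
    rw [Set.disjoint_left]
    rintro Q ⟨m, hm1, hm, hQm⟩ ⟨n, hn, hQn⟩
    rcases lt_trichotomy m n with h | h | h
    · exact (hQn.2 m h).1 hQm.1
    · subst h; exact Nat.not_even_iff_odd.2 hn hm
    · exact (hQm.2 n h).1 hQn.1
  have hsymm : ∀ (A : ValuationSubring K) (x y : P1 K), tpCong A x y → tpCong A y x := by
    rintro A x y ⟨a, b, ha, hb, hab⟩
    exact ⟨b, a, hb, ha, fun i => (hab i).symm⟩
  have hstep : ∀ n Q, Q ∈ tpLev f e e' (n + 1) → f Q ∈ tpLev f e e' n := by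
    intro n Q hQ
    refine ⟨by rw [← Function.iterate_succ_apply f]; exact hQ.1, fun m hm => ?_⟩
    rw [← Function.iterate_succ_apply f]
    exact hQ.2 (m + 1) (by omega)
  have hXY : X ⊆ f ⁻¹' Y := by
    rintro Q ⟨m, hm1, hm, hQ⟩
    obtain ⟨k, rfl⟩ : ∃ k, m = k + 1 := ⟨m - 1, by omega⟩
    exact ⟨k, by rw [Nat.even_add_one] at hm; exact Nat.not_even_iff_odd.1 hm, hstep k Q hQ⟩
  have hYX : Y ⊆ f ⁻¹' (insert e X) := by
    rintro Q ⟨m, hm, hQ⟩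
    obtain ⟨k, rfl⟩ : ∃ k, m = k + 1 := ⟨m - 1, by have := hm.pos; omega⟩
    have := hstep k Q hQ
    rcases Nat.eq_zero_or_pos k with rfl | hk
    · exact Or.inl this.1
    · refine Or.inr ⟨k, hk, ?_, this⟩
      by_contra h
      exact Nat.not_odd_iff_even.2 (Nat.not_even_iff_odd.1 h).add_one hm
  have hfib := tp_preimage f (d + 1) (fun t => tp_fiber (by omega) φ t)
  have hmain := tp_two_sets T X Y hdisj (by
    rintro v hv x ⟨m, hm1, hm, hxm⟩ y ⟨n, hn, hyn⟩ hc
    have hmod := tp_model φ v (hgr v hv)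
    have hodd : Odd (m + n) := hm.add_odd hn
    rcases lt_trichotomy m n with h | h | h
    · exact tp_lev_noncong _ f d hmod e e' he he' hne m n h hodd x y hxm hyn (hsymm _ _ _ hc)
    · subst h; exact Nat.not_even_iff_odd.2 hn hm
    · exact tp_lev_noncong _ f d hmod e e' he he' hne n m h (by rwa [add_comm]) y x hyn hxm hc)
  have hbd : (X ∪ Y).Finite ∧ (X ∪ Y).ncard ≤ (d + 2) * (N + 1) := by
    rcases hmain with ⟨hfin, hcard⟩ | ⟨hfin, hcard⟩
    · obtain ⟨p1, p2⟩ := hfib (insert e X) (hfin.insert e)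
      have hYf := p1.subset hYX
      refine ⟨hfin.union hYf, (Set.ncard_union_le _ _).trans ?_⟩
      have q1 := Set.ncard_le_ncard hYX p1
      have q2 := Set.ncard_insert_le e X
      have q3 : (d + 1) * (insert e X).ncard ≤ (d + 1) * (N + 1) := Nat.mul_le_mul_left _ (by omega)
      have q4 : (d + 2) * (N + 1) = (d + 1) * (N + 1) + (N + 1) := by ring
      omega
    · obtain ⟨p1, p2⟩ := hfib Y hfin
      have hXf := p1.subset hXY
      refine ⟨hXf.union hfin, (Set.ncard_union_le _ _).trans ?_⟩
      have q1 := Set.ncard_le_ncard hXY p1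
      have q3 : (d + 1) * Y.ncard ≤ (d + 1) * (N + 1) := Nat.mul_le_mul_left _ (by omega)
      have q4 : (d + 2) * (N + 1) = (d + 1) * (N + 1) + (N + 1) := by ring
      omega
  exact ⟨hbd.1.subset hsub, (Set.ncard_le_ncard hsub hbd.1).trans hbd.2⟩

theorem tp_const (s : ℕ) (hs : 1 ≤ s) : 6 * (4000 : ℝ) ^ s ≤ Cconst 3 s := by
  unfold Cconst
  have hs' : (1 : ℝ) ≤ s := by exact_mod_cast hs
  have h1 : (2 + 9 * s : ℝ) ≤ (6 * (3 : ℕ) : ℝ) ^ (3 * 3) * ((3 : ℕ) * s + 1 - (3 : ℕ)) := by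
    norm_num
    nlinarith
  refine le_trans ?_ (Real.exp_le_exp.2 h1)
  have he := Real.exp_one_gt_d9
  rw [Real.exp_add]
  have h2 : (6 : ℝ) ≤ Real.exp 2 := by
    have : Real.exp 2 = Real.exp 1 ^ 2 := by rw [← Real.exp_nat_mul]; norm_num
    rw [this]; nlinarith
  have h3 : (4000 : ℝ) ≤ Real.exp 9 := by
    have : Real.exp 9 = Real.exp 1 ^ 9 := by rw [← Real.exp_nat_mul]; norm_num
    rw [this]
    calc (4000 : ℝ) ≤ 2.7 ^ 9 := by norm_num
      _ ≤ Real.exp 1 ^ 9 := by gcongr; linarith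
  have h4 : (4000 : ℝ) ^ s ≤ Real.exp (9 * s) := by
    rw [mul_comm, Real.exp_nat_mul]
    gcongr
  gcongr

/-- **Lemma (tail of a point of period two).** If `P ∈ ℙ¹(K)` is a periodic point of `φ` of
period `2`, then `|Tail(φ,K,P)| ≤ L₂(d,|S|)`. -/
theorem tailOf_period_two_bound
    {K : Type*} [Field K] [NumberField K]
    (T : Finset (HeightOneSpectrum (𝓞 K))) {d : ℕ} (hd : 2 ≤ d)
    (φ : P1Map K d) (hgr : GoodReductionOutside φ T)
    (P : P1 K) (hP : Function.minimalPeriod φ.toFun P = 2) :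
    (TailOf φ P).Finite ∧ ((TailOf φ P).ncard : ℝ) ≤ L2const d (sCard K T) := by
  set f := φ.toFun with hf
  have hper : f^[2] P = P := by
    rw [← hP]; exact Function.isPeriodicPt_minimalPeriod f P
  have he' : f (f P) = P := hper
  have hne : P ≠ f P := by
    intro h
    have : Function.IsFixedPt f P := h.symm
    have := Function.minimalPeriod_eq_one_iff_isFixedPt.2 this
    omega
  obtain ⟨a1, a2⟩ := tp_side T hd φ hgr P (f P) rfl he' hne
  obtain ⟨b1, b2⟩ := tp_side T hd φ hgr (f P) P he' rfl hne.symm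
  have hsub : TailOf φ P ⊆ {Q | ∃ n, 1 ≤ n ∧ Q ∈ tpLev φ.toFun P (f P) n} ∪
      {Q | ∃ n, 1 ≤ n ∧ Q ∈ tpLev φ.toFun (f P) P n} := by
    rintro Q ⟨hQ, n0, hn0⟩
    have hex : ∃ n, f^[n] Q = P ∨ f^[n] Q = f P := ⟨n0, Or.inl hn0⟩
    have hspec := Nat.find_spec hex
    have hmin := fun m (hm : m < Nat.find hex) => Nat.find_min hex hm
    set n := Nat.find hex
    have hn : 1 ≤ n := by
      by_contra h0
      have h0 : n = 0 := by omega
      rw [h0] at hspec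
      simp only [Function.iterate_zero, id] at hspec
      apply hQ
      refine ⟨2, by norm_num, ?_⟩
      rcases hspec with h | h
      · rw [h]; exact hper
      · rw [h]; change f (f (f P)) = f P; rw [he']
    rcases hspec with h | h
    · refine Or.inl ⟨n, hn, h, fun m hm => ?_⟩
      have := hmin m hm
      push Not at this
      exact this
    · refine Or.inr ⟨n, hn, h, fun m hm => ?_⟩
      have := hmin m hm
      push Not at this
      exact this.symm
  have hfin := a1.union b1
  refine ⟨hfin.subset hsub, ?_⟩
  have hcard := (Set.ncard_le_ncard hsub hfin).trans (Set.ncard_union_le _ _)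
  have hcard2 : (TailOf φ P).ncard ≤ 2 * ((d + 2) * (2 * 4000 ^ sCard K T + 1)) := by omega
  have hs : 1 ≤ sCard K T := by
    have : 0 < Fintype.card (InfinitePlace K) := Fintype.card_pos
    unfold sCard; omega
  have hC := tp_const _ hs
  have hpow : (1 : ℝ) ≤ 4000 ^ sCard K T := one_le_pow₀ (by norm_num)
  have hd' : (2 : ℝ) ≤ d := by exact_mod_cast hd
  have hcR : ((TailOf φ P).ncard : ℝ) ≤ 2 * ((d + 2) * (2 * 4000 ^ sCard K T + 1)) := by
    exact_mod_cast hcard2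
  refine le_trans ?_ (le_max_left _ _)
  refine hcR.trans ?_
  have h5 : 2 * (((d : ℝ) + 2) * (2 * 4000 ^ sCard K T + 1)) ≤ 2 * ((2 * d) * (3 * 4000 ^ sCard K T)) := by
    gcongr <;> linarith
  have h6 : (d : ℝ) * (6 * 4000 ^ sCard K T) ≤ d * Cconst 3 (sCard K T) := by gcongr
  nlinarith
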